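/- arXiv:1607.05374 — 3 statements merged into one kernel-verified Lean document; each statement's English description precedes it below -/
import Mathlib

section
/- Let n ≥ 3. Suppose u ∈ C²(𝔹ⁿ,ℝⁿ) ∩ C(cl 𝔹ⁿ,ℝⁿ) satisfies Δ_h u(x) = ψ(x) for all x ∈ 𝔹ⁿ with ψ ∈ C(𝔹ⁿ,ℝⁿ), u(ξ) = φ(ξ) for ξ ∈ 𝕊ⁿ⁻¹, and ∫_{𝔹ⁿ} (1−|x|²)^{n−1} |ψ(x)| dτ(x) ≤ μ₁ for some constant μ₁ ≥ 0. Then u(0) = ∫_{𝕊ⁿ⁻¹} φ(ξ) dσ(ξ) − ∫_{𝔹ⁿ} g(|x|) ψ(x) dτ(x). -/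
/-!
The field `V = (1-|x|²)^{2-n} ∇u` satisfies `div V = (1-|x|²)^{-n} Δ_h u = (1-|x|²)^{-n} ψ`. Testing
this with a compactly supported radial function `χ(x) = X(|x|)`, `X' = -q`, gives (`weak_form`)

  `∫ χ (1-|x|²)^{-n} ψ dx = ∫ q(|x|) (1-|x|²)^{2-n} ∂_r u dx`.

The choice `q(s) = k(s) (1-s²)^{n-2} s^{1-n}`, with a cutoff `k` supported in `(0, 1)`, makes `X` a
truncation of `n g`. In polar coordinates the right-hand side becomes `∫_𝕊 ∫_0^1 k(r) ∂_r u(rξ) dr dξ`,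
which equals `-∫_𝕊 ∫_0^1 k'(r) u(rξ) dr dξ` by a one-dimensional integration by parts
(`gradient_integral`). No Green function singularity and no boundary derivative of `u` ever appears.

Now let `k` tend to `1` on `(0, 1)`. The derivatives `k'` tend to `δ₀ - δ₁`, so the right-hand
side tends to `∫_𝕊 (u(ξ) - u(0)) dξ`, using only the continuity of `u` on the closed ball
(`sphere_limit`). The left-hand side tends to `n ∫ g(|x|) (1-|x|²)^{-n} ψ dx` by dominated convergence
(`volume_limit`): since `n g(r) ≤ r^{1-n} (1-r²)^{n-1}`, the integrand is controlled by
`|x|^{1-n} (1-|x|²)^{-1} |ψ|`, which is integrable by the hypothesis on `ψ`. Dividing by the area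
`n |𝔹ⁿ|` of the sphere turns the resulting identity into the claim.
-/

open MeasureTheory Metric Set

noncomputable section

/-- The open unit ball setting: Euclidean n-space. -/
abbrev En (n : ℕ) := EuclideanSpace ℝ (Fin n)

/-- Lebesgue volume measure normalized so that the unit ball has measure 1. -/
def nuMeasure (n : ℕ) : Measure (En n) :=
  (volume (ball (0 : En n) 1))⁻¹ • (volume : Measure (En n))

/-- The Möbius invariant measure `dτ(x) = dν(x)/(1-|x|²)ⁿ`. -/
def tauMeasure (n : ℕ) : Measure (En n) :=
  (nuMeasure n).withDensity fun x => ENNReal.ofReal ((1 - ‖x‖ ^ 2) ^ n)⁻¹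

/-- The surface measure on the unit sphere, normalized so that the sphere has measure 1. -/
def sigmaMeasure (n : ℕ) : Measure (sphere (0 : En n) 1) :=
  ((volume : Measure (En n)).toSphere univ)⁻¹ • (volume : Measure (En n)).toSphere

/-- `[a,x]` via the identity `[a,x]² = |x-a|² + (1-|x|²)(1-|a|²)`. -/
def qbracket {n : ℕ} (a x : En n) : ℝ :=
  Real.sqrt (‖x - a‖ ^ 2 + (1 - ‖x‖ ^ 2) * (1 - ‖a‖ ^ 2))

/-- The Möbius transformation `φ_a` of the unit ball with `φ_a(a) = 0`, `φ_a(0) = a`. -/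
def mobius {n : ℕ} (a x : En n) : En n :=
  (qbracket a x ^ 2)⁻¹ • (‖x - a‖ ^ 2 • a - (1 - ‖a‖ ^ 2) • (x - a))

/-- `g(r) = (1/n) ∫_r^1 (1-s²)^{n-2} s^{-(n-1)} ds`. -/
def gfun (n : ℕ) (r : ℝ) : ℝ :=
  (1 / (n : ℝ)) * ∫ s in r..(1 : ℝ), (1 - s ^ 2) ^ (n - 2) / s ^ (n - 1)

/-- The hyperbolic Green function `G_h(x,y) = g(|φ_x(y)|)`. -/
def Gh (n : ℕ) (x y : En n) : ℝ := gfun n ‖mobius x y‖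

/-- The Green integral `G_h[ψ](x) = ∫_{𝔹ⁿ} G_h(x,y) ψ(y) dτ(y)`. -/
def GhInt (n : ℕ) (ψ : En n → En n) (x : En n) : En n :=
  ∫ y in ball (0 : En n) 1, Gh n x y • ψ y ∂(tauMeasure n)

/-- The Poisson–Szegő kernel `P_h(x,ξ) = ((1-|x|²)/|ξ-x|²)^{n-1}`. -/
def Ph (n : ℕ) (x : En n) (ξ : sphere (0 : En n) 1) : ℝ :=
  ((1 - ‖x‖ ^ 2) / ‖(ξ : En n) - x‖ ^ 2) ^ (n - 1)

/-- The Poisson integral `P_h[φ](x) = ∫_{𝕊ⁿ⁻¹} P_h(x,ξ) φ(ξ) dσ(ξ)`. -/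
def PhInt (n : ℕ) (φ : En n → En n) (x : En n) : En n :=
  ∫ ξ, Ph n x ξ • φ (ξ : En n) ∂(sigmaMeasure n)

/-- The `i`-th standard basis vector. -/
def basisE (n : ℕ) (i : Fin n) : En n := EuclideanSpace.single i 1

/-- The Euclidean Laplacian of a vector-valued function. -/
def lap {n : ℕ} (u : En n → En n) (x : En n) : En n :=
  ∑ i : Fin n, fderiv ℝ (fun y => fderiv ℝ u y (basisE n i)) x (basisE n i)

/-- The hyperbolic Laplacian
`Δ_h u(x) = (1-|x|²)² Δu(x) + 2(n-2)(1-|x|²) Σᵢ xᵢ ∂u/∂xᵢ(x)`. -/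
def hypLap (n : ℕ) (u : En n → En n) (x : En n) : En n :=
  (1 - ‖x‖ ^ 2) ^ 2 • lap u x
    + (2 * ((n : ℝ) - 2) * (1 - ‖x‖ ^ 2)) • ∑ i : Fin n, x i • fderiv ℝ u x (basisE n i)

/-- Pochhammer symbol `(a)_k`. -/
def poch (a : ℝ) (k : ℕ) : ℝ := (ascPochhammer ℝ k).eval a

/-- Gauss hypergeometric series `F(a,b;c;s)`. -/
def hyperF (a b c s : ℝ) : ℝ :=
  ∑' k : ℕ, poch a k * poch b k / ((k.factorial : ℝ) * poch c k) * s ^ k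

/-- A majorant: continuous, increasing, `ω(0)=0`, with `ω(t)/t` non-increasing. -/
def IsMajorant (ω : ℝ → ℝ) : Prop :=
  ContinuousOn ω (Ici 0) ∧ MonotoneOn ω (Ici 0) ∧ ω 0 = 0 ∧
    (∀ x ∈ Ici (0:ℝ), 0 ≤ ω x) ∧
    ∀ s t : ℝ, 0 < s → s ≤ t → ω t / t ≤ ω s / s

/-- A fast majorant: `∫₀^ρ ω(t)/t dt ≤ C ω(ρ)` for small `ρ`. -/
def IsFastMajorant (ω : ℝ → ℝ) : Prop :=
  IsMajorant ω ∧ ∃ ρ₀ > (0:ℝ), ∃ C : ℝ,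
    ∀ ρ : ℝ, 0 < ρ → ρ < ρ₀ → (∫ t in (0:ℝ)..ρ, ω t / t) ≤ C * ω ρ

end

open Filter Topology

/-! ### Radial functions -/

/-- The divergence theorem for a compactly supported field, one direction at a time: there is no
boundary term. -/
theorem integral_fderiv_eq_zero {n : ℕ} (f : En n → En n) (hf : ContDiff ℝ 1 f)
    (hc : HasCompactSupport f) (v : En n) : ∫ x, fderiv ℝ f x v = 0 := by
  have hc' : HasCompactSupport (fun x => fderiv ℝ f x v) := hc.fderiv_apply ℝ v
  have hcont : Continuous (fun x => fderiv ℝ f x v) :=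
    (hf.continuous_fderiv one_ne_zero).clm_apply continuous_const
  have h := integral_smul_fderiv_eq_neg_fderiv_smul_of_integrable (μ := (volume : Measure (En n)))
    (𝕜 := ℝ) (f := fun _ : En n => (1 : ℝ)) (g := f) (v := v) (by simp)
    (by simpa using hcont.integrable_of_hasCompactSupport hc')
    (by simpa using hf.continuous.integrable_of_hasCompactSupport hc)
    (fun x _ => differentiableAt_const _) (fun x _ => (hf.differentiable one_ne_zero) x)
  simpa using h

/-- Differentiability of `x ↦ X |x|` for `X' = -q`. As `q` vanishes near `0`, so that `X` is constant
there, the formula also holds at the origin, where the norm is not differentiable. -/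
theorem hasFDerivAt_radial {n : ℕ} {X q : ℝ → ℝ} (hX : ∀ r, HasDerivAt X (-q r) r)
    {a : ℝ} (ha : 0 < a) (hqa : ∀ r ≤ a, q r = 0) (x : En n) :
    HasFDerivAt (fun x : En n => X ‖x‖) (-(q ‖x‖ / ‖x‖) • innerSL ℝ x) x := by
  rcases eq_or_ne x 0 with rfl | hx
  · have hconst : ∀ r ∈ Iio a, X r = X 0 := by
      intro r hr
      refine (convex_Iio a).is_const_of_fderivWithin_eq_zero (𝕜 := ℝ)
        (fun y _ => (hX y).differentiableAt.differentiableWithinAt) (fun y hy => ?_) hr ha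
      rw [fderivWithin_of_isOpen isOpen_Iio hy]
      have := (hX y).hasFDerivAt.fderiv
      rw [this, hqa y (le_of_lt hy)]
      simp
    have hev : (fun x : En n => X ‖x‖) =ᶠ[nhds 0] fun _ => X 0 := by
      filter_upwards [ball_mem_nhds (0 : En n) ha] with y hy
      exact hconst _ (by simpa using hy)
    simpa using (hasFDerivAt_const (X 0) (0 : En n)).congr_of_eventuallyEq hev
  · have hn : ‖x‖ ≠ 0 := norm_ne_zero_iff.2 hx
    have h1 : HasFDerivAt (fun x : En n => ‖x‖) (‖x‖⁻¹ • innerSL ℝ x) x := by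
      have h2 := ((hasStrictFDerivAt_norm_sq x).hasFDerivAt.sqrt (by positivity))
      simp only [Real.sqrt_sq (norm_nonneg _)] at h2
      have h3 : (1 / (2 * ‖x‖)) • 2 • innerSL ℝ x = ‖x‖⁻¹ • innerSL ℝ x := by
        rw [← Nat.cast_smul_eq_nsmul ℝ, smul_smul]
        congr 1
        push_cast
        field_simp
      rwa [h3] at h2
    have h4 := (hX ‖x‖).comp_hasFDerivAt x h1
    rw [smul_smul, ← div_eq_mul_inv, neg_div] at h4
    exact h4

theorem contDiff_radial {n : ℕ} {X q : ℝ → ℝ} (hX : ∀ r, HasDerivAt X (-q r) r)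
    (hq : Continuous q) {a : ℝ} (ha : 0 < a) (hqa : ∀ r ≤ a, q r = 0) :
    ContDiff ℝ 1 (fun x : En n => X ‖x‖) := by
  rw [contDiff_one_iff_fderiv]
  refine ⟨fun x => (hasFDerivAt_radial hX ha hqa x).differentiableAt, ?_⟩
  have : fderiv ℝ (fun x : En n => X ‖x‖) = fun x => -(q ‖x‖ / ‖x‖) • innerSL ℝ x :=
    funext fun x => (hasFDerivAt_radial hX ha hqa x).fderiv
  rw [this, continuous_iff_continuousAt]
  intro x
  rcases eq_or_ne x 0 with rfl | hx
  · have hev : (fun x : En n => -(q ‖x‖ / ‖x‖) • innerSL ℝ x) =ᶠ[nhds 0] fun _ => 0 := by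
      filter_upwards [ball_mem_nhds (0 : En n) ha] with y hy
      have hy : ‖y‖ < a := by simpa using hy
      rw [hqa _ hy.le]; simp
    exact (continuousAt_const).congr hev.symm
  · have hn : ‖x‖ ≠ 0 := norm_ne_zero_iff.2 hx
    have : ContinuousAt (fun x : En n => q ‖x‖ / ‖x‖) x :=
      (hq.comp continuous_norm).continuousAt.div continuous_norm.continuousAt hn
    exact this.neg.smul (innerSL ℝ).continuous.continuousAt

/-! ### Divergence form of the hyperbolic Laplacian -/

theorem one_sub_normSq_pos {n : ℕ} {x : En n} (hx : x ∈ ball (0 : En n) 1) : 0 < 1 - ‖x‖ ^ 2 := by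
  have : ‖x‖ < 1 := by simpa using hx
  nlinarith [norm_nonneg x]

theorem sum_coord_smul_fderiv {n : ℕ} (u : En n → En n) (x y : En n) :
    ∑ i : Fin n, x i • fderiv ℝ u y (basisE n i) = fderiv ℝ u y x := by
  have h : x = ∑ i : Fin n, x i • basisE n i := by
    have := (EuclideanSpace.basisFun (Fin n) ℝ).sum_repr x
    simpa [basisE] using this.symm
  conv_rhs => rw [h]
  simp [map_sum]

theorem inner_basisE {n : ℕ} (x : En n) (i : Fin n) : inner ℝ x (basisE n i) = x i := by
  simp [basisE, EuclideanSpace.inner_single_right]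

/-- The gradient of the weight `(1-|x|²)^{2-n}` is `2(n-2)(1-|x|²)^{1-n} x`. -/
theorem hasFDerivAt_weight {n : ℕ} (hn : 3 ≤ n) {x : En n} (hx : x ∈ ball (0 : En n) 1) :
    HasFDerivAt (fun x : En n => ((1 - ‖x‖ ^ 2) ^ (n - 2))⁻¹)
      ((2 * ((n : ℝ) - 2) * ((1 - ‖x‖ ^ 2) ^ (n - 1))⁻¹) • innerSL ℝ x) x := by
  have hp := one_sub_normSq_pos hx
  have h1 := ((hasStrictFDerivAt_norm_sq x).hasFDerivAt.const_sub 1)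
  have h2 : HasDerivAt (fun t : ℝ => (t ^ (n - 2))⁻¹)
      (-((n : ℝ) - 2) * ((1 - ‖x‖ ^ 2) ^ (n - 1))⁻¹) (1 - ‖x‖ ^ 2) := by
    obtain ⟨m, rfl⟩ : ∃ m, n = m + 3 := ⟨n - 3, by omega⟩
    have := (hasDerivAt_pow (m + 3 - 2) (1 - ‖x‖ ^ 2)).inv (by positivity)
    refine this.congr_deriv ?_
    rw [show m + 3 - 2 = m + 1 by omega, show m + 3 - 1 = m + 2 by omega, Nat.add_sub_cancel]
    push_cast
    field_simp
    ring
  have h3 := h2.comp_hasFDerivAt x h1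
  have h4 : (-((n : ℝ) - 2) * ((1 - ‖x‖ ^ 2) ^ (n - 1))⁻¹) • -(2 • innerSL ℝ x)
      = (2 * ((n : ℝ) - 2) * ((1 - ‖x‖ ^ 2) ^ (n - 1))⁻¹) • innerSL ℝ x := by
    rw [← Nat.cast_smul_eq_nsmul ℝ, ← neg_smul, smul_smul]
    congr 1
    push_cast
    ring
  rw [h4] at h3
  exact h3

/-- The hyperbolic Laplacian in divergence form, multiplied by a radial test function `χ = X(|·|)` with
`X' = -q`: `div(χ (1-|x|²)^{2-n} ∇u) = χ (1-|x|²)^{-n} Δ_h u - (q(|x|)/|x|) (1-|x|²)^{2-n} ∇u · x`. -/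
theorem div_identity {n : ℕ} (hn : 3 ≤ n) {u ψ : En n → En n}
    (hu2 : ContDiffOn ℝ 2 u (ball (0 : En n) 1))
    (heq : ∀ x ∈ ball (0 : En n) 1, hypLap n u x = ψ x)
    {X q : ℝ → ℝ} (hX : ∀ r, HasDerivAt X (-q r) r)
    {a : ℝ} (ha : 0 < a) (hqa : ∀ r ≤ a, q r = 0) {x : En n} (hx : x ∈ ball (0 : En n) 1) :
    ∑ i : Fin n, fderiv ℝ (fun y : En n =>
        (X ‖y‖ * ((1 - ‖y‖ ^ 2) ^ (n - 2))⁻¹) • fderiv ℝ u y (basisE n i)) x (basisE n i)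
      = (X ‖x‖ * ((1 - ‖x‖ ^ 2) ^ n)⁻¹) • ψ x
        - (q ‖x‖ / ‖x‖ * ((1 - ‖x‖ ^ 2) ^ (n - 2))⁻¹) • fderiv ℝ u x x := by
  have hp := one_sub_normSq_pos hx
  have hud : DifferentiableAt ℝ (fderiv ℝ u) x :=
    ((hu2.contDiffAt (isOpen_ball.mem_nhds hx)).fderiv_right (m := 1) (by norm_num)).differentiableAt
      one_ne_zero
  have hi : ∀ i : Fin n, fderiv ℝ (fun y : En n =>
        (X ‖y‖ * ((1 - ‖y‖ ^ 2) ^ (n - 2))⁻¹) • fderiv ℝ u y (basisE n i)) x (basisE n i)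
      = (X ‖x‖ * ((1 - ‖x‖ ^ 2) ^ (n - 2))⁻¹) •
          fderiv ℝ (fun y => fderiv ℝ u y (basisE n i)) x (basisE n i)
        + (X ‖x‖ * (2 * ((n : ℝ) - 2) * ((1 - ‖x‖ ^ 2) ^ (n - 1))⁻¹)
            - q ‖x‖ / ‖x‖ * ((1 - ‖x‖ ^ 2) ^ (n - 2))⁻¹) •
          (x i • fderiv ℝ u x (basisE n i)) := by
    intro i
    have h1 := ((hasFDerivAt_radial hX ha hqa x).mul (hasFDerivAt_weight hn hx)).smul
      (hud.clm_apply (differentiableAt_const (basisE n i))).hasFDerivAt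
    have h2 := congrArg (fun L => L (basisE n i)) h1.fderiv
    refine h2.trans ?_
    simp only [add_apply, smul_apply,
      ContinuousLinearMap.smulRight_apply, innerSL_apply_apply, inner_basisE, smul_eq_mul]
    rw [smul_smul]
    congr 2
    ring
  simp only [hi, Finset.sum_add_distrib, ← Finset.smul_sum]
  rw [sum_coord_smul_fderiv, ← heq x hx, hypLap, sum_coord_smul_fderiv, ← lap]
  obtain ⟨m, rfl⟩ : ∃ m, n = m + 3 := ⟨n - 3, by omega⟩
  simp only [show m + 3 - 2 = m + 1 by omega, show m + 3 - 1 = m + 2 by omega]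
  rw [smul_add, smul_smul, smul_smul, sub_smul, ← add_sub_assoc]
  congr 3
  · field_simp
    ring
  · field_simp
    ring

/-- A field continuous in the open ball and vanishing off a smaller ball is integrable; nothing is
assumed about `f` at the unit sphere or beyond. -/
theorem integrable_of_zero_off {n : ℕ} {f : En n → En n} {b : ℝ} (hb : b < 1)
    (hf : ContinuousOn f (ball (0 : En n) 1)) (hz : ∀ x, b ≤ ‖x‖ → f x = 0) : Integrable f := by
  have h1 : IntegrableOn f (closedBall (0 : En n) b) :=
    (hf.mono (closedBall_subset_ball hb)).integrableOn_compact (isCompact_closedBall _ _)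
  refine (integrableOn_iff_integrable_of_support_subset ?_).1 h1
  intro x hx
  by_contra h
  exact hx (hz x (by simpa using (not_le.1 (by simpa using h)).le))

/-- The components of `χ (1-|x|²)^{2-n} ∇u` are globally `C¹` with compact support in the ball. -/
theorem contDiff_field {n : ℕ} {u : En n → En n}
    (hu2 : ContDiffOn ℝ 2 u (ball (0 : En n) 1))
    {X q : ℝ → ℝ} (hX : ∀ r, HasDerivAt X (-q r) r) (hq : Continuous q)
    {a b : ℝ} (ha : 0 < a) (hb : b < 1) (hqa : ∀ r ≤ a, q r = 0)
    (hXb : ∀ r, b ≤ r → X r = 0) (v : En n) :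
    ContDiff ℝ 1 (fun y : En n => (X ‖y‖ * ((1 - ‖y‖ ^ 2) ^ (n - 2))⁻¹) • fderiv ℝ u y v) ∧
    HasCompactSupport (fun y : En n => (X ‖y‖ * ((1 - ‖y‖ ^ 2) ^ (n - 2))⁻¹) • fderiv ℝ u y v) := by
  have hzero : ∀ y : En n, b ≤ ‖y‖ → (X ‖y‖ * ((1 - ‖y‖ ^ 2) ^ (n - 2))⁻¹) • fderiv ℝ u y v = 0 := by
    intro y hy
    rw [hXb _ hy]; simp
  constructor
  · rw [contDiff_iff_contDiffAt]
    intro x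
    by_cases hx : x ∈ ball (0 : En n) 1
    · have hp := one_sub_normSq_pos hx
      refine ContDiffAt.smul (ContDiffAt.mul (contDiff_radial hX hq ha hqa).contDiffAt
        (ContDiffAt.inv ?_ (by positivity))) ?_
      · exact (contDiffAt_const.sub (contDiff_norm_sq ℝ).contDiffAt).pow _
      · exact ((hu2.contDiffAt (isOpen_ball.mem_nhds hx)).fderiv_right (m := 1)
          (by norm_num)).clm_apply contDiffAt_const
    · have hx1 : b < ‖x‖ := by
        have : 1 ≤ ‖x‖ := by simpa using hx
        linarith
      refine (contDiffAt_const (c := (0 : En n))).congr_of_eventuallyEq ?_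
      filter_upwards [(isOpen_lt continuous_const continuous_norm).mem_nhds hx1] with y hy
      exact hzero y (le_of_lt hy)
  · refine HasCompactSupport.intro (isCompact_closedBall (0 : En n) b) fun y hy => hzero y ?_
    exact (not_le.1 (by simpa using hy)).le

/-- The equation `Δ_h u = ψ` tested against the radial function `X(|·|)`, `X' = -q`. -/
theorem weak_form {n : ℕ} (hn : 3 ≤ n) {u ψ : En n → En n}
    (hu2 : ContDiffOn ℝ 2 u (ball (0 : En n) 1))
    (hψc : ContinuousOn ψ (ball (0 : En n) 1))
    (heq : ∀ x ∈ ball (0 : En n) 1, hypLap n u x = ψ x)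
    {X q : ℝ → ℝ} (hX : ∀ r, HasDerivAt X (-q r) r) (hq : Continuous q)
    {a b : ℝ} (ha : 0 < a) (hb : b < 1) (hqa : ∀ r ≤ a, q r = 0) (hqb : ∀ r, b ≤ r → q r = 0)
    (hXb : ∀ r, b ≤ r → X r = 0) :
    ∫ x : En n, (X ‖x‖ * ((1 - ‖x‖ ^ 2) ^ n)⁻¹) • ψ x
      = ∫ x : En n, (q ‖x‖ / ‖x‖ * ((1 - ‖x‖ ^ 2) ^ (n - 2))⁻¹) • fderiv ℝ u x x := by
  have hXc : Continuous X := continuous_iff_continuousAt.2 fun r => (hX r).continuousAt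
  have hw : ∀ k : ℕ, ContinuousOn (fun x : En n => ((1 - ‖x‖ ^ 2) ^ k)⁻¹) (ball (0 : En n) 1) := by
    intro k
    refine ContinuousOn.inv₀ (by fun_prop) fun x hx => ?_
    have := one_sub_normSq_pos hx
    positivity
  have hI1 : Integrable (fun x : En n => (X ‖x‖ * ((1 - ‖x‖ ^ 2) ^ n)⁻¹) • ψ x) := by
    refine integrable_of_zero_off hb ?_ fun x hx => by rw [hXb _ hx]; simp
    exact ((hXc.comp continuous_norm).continuousOn.mul (hw n)).smul hψc
  have hqn : Continuous (fun r : ℝ => q r / r) := by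
    rw [continuous_iff_continuousAt]
    intro r
    rcases eq_or_ne r 0 with rfl | hr
    · have hev : (fun r : ℝ => q r / r) =ᶠ[nhds 0] fun _ => 0 := by
        filter_upwards [Iio_mem_nhds ha] with y hy
        rw [hqa _ (le_of_lt hy)]; simp
      exact continuousAt_const.congr hev.symm
    · exact hq.continuousAt.div continuousAt_id hr
  have hI2 : Integrable (fun x : En n =>
      (q ‖x‖ / ‖x‖ * ((1 - ‖x‖ ^ 2) ^ (n - 2))⁻¹) • fderiv ℝ u x x) := by
    refine integrable_of_zero_off hb ?_ fun x hx => by rw [hqb _ hx]; simp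
    refine ((hqn.comp continuous_norm).continuousOn.mul (hw (n - 2))).smul ?_
    exact (hu2.continuousOn_fderiv_of_isOpen isOpen_ball (by norm_num)).clm_apply continuousOn_id
  rw [← sub_eq_zero, ← integral_sub hI1 hI2]
  have hF := fun i : Fin n => contDiff_field hu2 hX hq ha hb hqa hXb (basisE n i)
  have hsum : ∀ x : En n, (X ‖x‖ * ((1 - ‖x‖ ^ 2) ^ n)⁻¹) • ψ x
        - (q ‖x‖ / ‖x‖ * ((1 - ‖x‖ ^ 2) ^ (n - 2))⁻¹) • fderiv ℝ u x x
      = ∑ i : Fin n, fderiv ℝ (fun y : En n =>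
        (X ‖y‖ * ((1 - ‖y‖ ^ 2) ^ (n - 2))⁻¹) • fderiv ℝ u y (basisE n i)) x (basisE n i) := by
    intro x
    by_cases hx : x ∈ ball (0 : En n) 1
    · exact (div_identity hn hu2 heq hX ha hqa hx).symm
    · have hx1 : b < ‖x‖ := by
        have : 1 ≤ ‖x‖ := by simpa using hx
        linarith
      rw [hXb _ hx1.le, hqb _ hx1.le]
      simp only [zero_mul, zero_div, zero_smul, sub_zero]
      refine (Finset.sum_eq_zero fun i _ => ?_).symm
      have hev : (fun y : En n => (X ‖y‖ * ((1 - ‖y‖ ^ 2) ^ (n - 2))⁻¹) • fderiv ℝ u y (basisE n i))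
          =ᶠ[nhds x] fun _ => 0 := by
        filter_upwards [(isOpen_lt continuous_const continuous_norm).mem_nhds hx1] with y hy
        rw [hXb _ (le_of_lt hy)]; simp
      rw [hev.fderiv_eq]; simp
  simp only [hsum]
  rw [integral_finsetSum]
  · exact Finset.sum_eq_zero fun i _ => integral_fderiv_eq_zero _ (hF i).1 (hF i).2 _
  · intro i _
    exact (((hF i).1.continuous_fderiv one_ne_zero).clm_apply
      continuous_const).integrable_of_hasCompactSupport ((hF i).2.fderiv_apply ℝ _)

/-! ### Polar coordinates and integration along rays -/

/-- Polar coordinates for vector-valued integrands. -/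
theorem integral_polar {n : ℕ} (hn : 3 ≤ n) {F : En n → En n} (hF : Integrable F) :
    ∫ x, F x = ∫ ξ : sphere (0 : En n) 1, (∫ r in Ioi (0 : ℝ), r ^ (n - 1) • F (r • (ξ : En n)))
      ∂(volume : Measure (En n)).toSphere := by
  have : Nontrivial (Fin n) := Fin.nontrivial_iff_two_le.2 (by omega)
  have hmp := (volume : Measure (En n)).measurePreserving_homeomorphUnitSphereProd
  have hemb := (homeomorphUnitSphereProd (En n)).measurableEmbedding
  have hinv : ∀ x : ({(0 : En n)}ᶜ : Set (En n)),
      (homeomorphUnitSphereProd (En n) x).2.1 • ((homeomorphUnitSphereProd (En n) x).1 : En n)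
        = x := by
    intro x
    have hx : ‖(x : En n)‖ ≠ 0 := norm_ne_zero_iff.2 x.2
    simp [smul_smul, hx]
  have hint : Integrable (fun p : sphere (0 : En n) 1 × Ioi (0 : ℝ) => F (p.2.1 • (p.1 : En n)))
      ((volume : Measure (En n)).toSphere.prod
        (Measure.volumeIoiPow (Module.finrank ℝ (En n) - 1))) := by
    rw [← hmp.integrable_comp_emb hemb]
    have : (fun p : sphere (0 : En n) 1 × Ioi (0 : ℝ) => F (p.2.1 • (p.1 : En n))) ∘
        (homeomorphUnitSphereProd (En n)) = F ∘ (Subtype.val) := by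
      funext x
      simp only [Function.comp_apply, hinv]
    rw [this, ← integrableOn_iff_comap_subtypeVal (measurableSet_singleton _).compl]
    exact hF.integrableOn
  calc ∫ x, F x
      = ∫ x : ({(0 : En n)}ᶜ : Set (En n)), F x ∂(volume.comap Subtype.val) := by
        rw [integral_subtype_comap (measurableSet_singleton _).compl F, restrict_compl_singleton]
    _ = ∫ p : sphere (0 : En n) 1 × Ioi (0 : ℝ), F (p.2.1 • (p.1 : En n))
          ∂((volume : Measure (En n)).toSphere.prod
            (Measure.volumeIoiPow (Module.finrank ℝ (En n) - 1))) := by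
        rw [← hmp.integral_comp hemb]
        simp only [hinv]
    _ = ∫ ξ : sphere (0 : En n) 1, (∫ r : Ioi (0 : ℝ), F (r.1 • (ξ : En n))
          ∂(Measure.volumeIoiPow (Module.finrank ℝ (En n) - 1)))
          ∂(volume : Measure (En n)).toSphere := integral_prod _ hint
    _ = _ := by
        congr 1
        funext ξ
        simp only [Measure.volumeIoiPow, ENNReal.ofReal, finrank_euclideanSpace_fin]
        rw [integral_withDensity_eq_integral_smul,
          integral_subtype_comap measurableSet_Ioi
            fun r : ℝ ↦ Real.toNNReal (r ^ (n - 1)) • F (r • (ξ : En n)),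
          setIntegral_congr_fun measurableSet_Ioi fun r hr ↦ ?_]
        · rw [NNReal.smul_def, Real.coe_toNNReal _ (pow_nonneg (mem_Ioi.1 hr).le _)]
        · exact (measurable_subtype_coe.pow_const _).real_toNNReal

/-- Integration by parts along the ray through `ξ`, on which `∇u(rξ) · ξ = d/dr u(rξ)`. -/
theorem radial_ibp {n : ℕ} {u : En n → En n}
    (hu2 : ContDiffOn ℝ 2 u (ball (0 : En n) 1))
    {k k' : ℝ → ℝ} (hk : ∀ r, HasDerivAt k (k' r) r) (hk' : Continuous k')
    {a b : ℝ} (ha : 0 < a) (hab : a < b) (hb : b < 1) (hka : ∀ r ≤ a, k r = 0)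
    (hkb : ∀ r, b ≤ r → k r = 0) (ξ : sphere (0 : En n) 1) :
    ∫ r in Ioi (0 : ℝ), k r • fderiv ℝ u (r • (ξ : En n)) ξ
      = -∫ r in (0 : ℝ)..1, k' r • u (r • (ξ : En n)) := by
  have hξ : ‖(ξ : En n)‖ = 1 := by simp
  have hb0 : 0 < b := ha.trans hab
  have hmem : ∀ r ∈ Icc 0 b, r • (ξ : En n) ∈ ball (0 : En n) 1 := by
    intro r hr
    rw [mem_ball_zero_iff, norm_smul, hξ, mul_one, Real.norm_eq_abs, abs_of_nonneg hr.1]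
    exact hr.2.trans_lt hb
  have hkc : Continuous k := continuous_iff_continuousAt.2 fun r => (hk r).continuousAt
  have hline : Continuous fun r : ℝ => r • (ξ : En n) := by fun_prop
  have huc : ContinuousOn (fun r : ℝ => u (r • (ξ : En n))) (Icc 0 b) :=
    hu2.continuousOn.comp hline.continuousOn hmem
  have hduc : ContinuousOn (fun r : ℝ => fderiv ℝ u (r • (ξ : En n)) (ξ : En n)) (Icc 0 b) :=
    ((hu2.continuousOn_fderiv_of_isOpen isOpen_ball (by norm_num)).comp hline.continuousOn
      hmem).clm_apply continuousOn_const
  have hderiv : ∀ r ∈ Icc 0 b, HasDerivAt (fun r : ℝ => u (r • (ξ : En n)))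
      (fderiv ℝ u (r • (ξ : En n)) (ξ : En n)) r := by
    intro r hr
    have h1 : HasFDerivAt u (fderiv ℝ u (r • (ξ : En n))) (r • (ξ : En n)) :=
      ((hu2.contDiffAt (isOpen_ball.mem_nhds (hmem r hr))).differentiableAt
        two_ne_zero).hasFDerivAt
    have h2 : HasDerivAt (fun r : ℝ => r • (ξ : En n)) (ξ : En n) r := by
      simpa using (hasDerivAt_id r).smul_const (ξ : En n)
    exact h1.comp_hasDerivAt r h2
  -- At `r = b` itself, `k' = 0` follows by continuity.
  have hk'b : ∀ r, b ≤ r → k' r = 0 := by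
    have h0 : EqOn k' (fun _ => 0) (Ioi b) := fun r hr => by
      have hev : k =ᶠ[nhds r] fun _ => 0 := by
        filter_upwards [Ioi_mem_nhds hr] with s hs
        exact hkb s (le_of_lt hs)
      rw [← (hk r).deriv, hev.deriv_eq]; simp
    have h1 := h0.closure hk' continuous_const
    rw [closure_Ioi] at h1
    exact fun r hr => h1 hr
  have e1 : ∫ r in Ioi (0 : ℝ), k r • fderiv ℝ u (r • (ξ : En n)) ξ
      = ∫ r in (0 : ℝ)..b, k r • fderiv ℝ u (r • (ξ : En n)) ξ := by
    rw [intervalIntegral.integral_of_le hb0.le]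
    refine (setIntegral_eq_of_subset_of_forall_sdiff_eq_zero measurableSet_Ioi
      Ioc_subset_Ioi_self fun r hr => ?_)
    have : b < r := by
      by_contra h
      exact hr.2 ⟨hr.1, not_lt.1 h⟩
    rw [hkb r this.le, zero_smul]
  have e2 : ∫ r in (0 : ℝ)..1, k' r • u (r • (ξ : En n))
      = ∫ r in (0 : ℝ)..b, k' r • u (r • (ξ : En n)) := by
    rw [intervalIntegral.integral_of_le hb0.le, intervalIntegral.integral_of_le zero_le_one]
    refine (setIntegral_eq_of_subset_of_forall_sdiff_eq_zero measurableSet_Ioc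
      (Ioc_subset_Ioc_right hb.le) fun r hr => ?_)
    have : b < r := by
      by_contra h
      exact hr.2 ⟨hr.1.1, not_lt.1 h⟩
    rw [hk'b r this.le, zero_smul]
  rw [e1, e2]
  have hIcc : uIcc (0 : ℝ) b = Icc 0 b := uIcc_of_le hb0.le
  rw [intervalIntegral.integral_smul_deriv_eq_deriv_smul_of_hasDerivAt hkc.continuousOn
    (by rw [hIcc]; exact huc) (fun r _ => hk r)
    (fun r hr => hderiv r (by
      rw [min_eq_left hb0.le, max_eq_right hb0.le] at hr; exact Ioo_subset_Icc_self hr))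
    (hk'.intervalIntegrable _ _) (ContinuousOn.intervalIntegrable (by rw [hIcc]; exact hduc))]
  rw [hkb b le_rfl, hka 0 ha.le]
  simp

/-- With `q(s) = k(s) (1-s²)^{n-2} / s^{n-1}` the right-hand side of `weak_form` is
`∫ k(|x|) |x|^{1-n} ∂_r u dx`: the weight and the Jacobian `r^{n-1}` both cancel, and only `k'`
remains. -/
theorem gradient_integral {n : ℕ} (hn : 3 ≤ n) {u : En n → En n}
    (hu2 : ContDiffOn ℝ 2 u (ball (0 : En n) 1))
    {k k' : ℝ → ℝ} (hk : ∀ r, HasDerivAt k (k' r) r) (hk' : Continuous k')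
    {a b : ℝ} (ha : 0 < a) (hab : a < b) (hb : b < 1) (hka : ∀ r ≤ a, k r = 0)
    (hkb : ∀ r, b ≤ r → k r = 0) :
    ∫ x : En n, (k ‖x‖ * ((1 - ‖x‖ ^ 2) ^ (n - 2) / ‖x‖ ^ (n - 1)) / ‖x‖
        * ((1 - ‖x‖ ^ 2) ^ (n - 2))⁻¹) • fderiv ℝ u x x
      = -∫ ξ : sphere (0 : En n) 1, (∫ r in (0 : ℝ)..1, k' r • u (r • (ξ : En n)))
        ∂(volume : Measure (En n)).toSphere := by
  have hkc : Continuous k := continuous_iff_continuousAt.2 fun r => (hk r).continuousAt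
  have hI : Integrable (fun x : En n => (k ‖x‖ * ((1 - ‖x‖ ^ 2) ^ (n - 2) / ‖x‖ ^ (n - 1)) / ‖x‖
        * ((1 - ‖x‖ ^ 2) ^ (n - 2))⁻¹) • fderiv ℝ u x x) := by
    refine integrable_of_zero_off hb ?_ fun x hx => by rw [hkb _ hx]; simp
    suffices hc : ∀ x ∈ ball (0 : En n) 1, ContinuousAt (fun x : En n =>
        k ‖x‖ * ((1 - ‖x‖ ^ 2) ^ (n - 2) / ‖x‖ ^ (n - 1)) / ‖x‖ * ((1 - ‖x‖ ^ 2) ^ (n - 2))⁻¹) x from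
      ContinuousOn.smul (fun x hx => (hc x hx).continuousWithinAt)
        ((hu2.continuousOn_fderiv_of_isOpen isOpen_ball (by norm_num)).clm_apply continuousOn_id)
    intro x hx
    have hp := one_sub_normSq_pos hx
    rcases eq_or_ne x 0 with rfl | hx0
    · have hev : (fun x : En n => k ‖x‖ * ((1 - ‖x‖ ^ 2) ^ (n - 2) / ‖x‖ ^ (n - 1)) / ‖x‖
          * ((1 - ‖x‖ ^ 2) ^ (n - 2))⁻¹) =ᶠ[nhds 0] fun _ => 0 := by
        filter_upwards [ball_mem_nhds (0 : En n) ha] with y hy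
        have hy : ‖y‖ < a := by simpa using hy
        rw [hka _ hy.le]; simp
      exact continuousAt_const.congr hev.symm
    · have hn : ‖x‖ ≠ 0 := norm_ne_zero_iff.2 hx0
      have h1 : (1 - ‖x‖ ^ 2) ^ (n - 2) ≠ 0 := by positivity
      have h2 : ‖x‖ ^ (n - 1) ≠ 0 := by positivity
      have := hkc.comp (continuous_norm (E := En n))
      refine ContinuousAt.mul (ContinuousAt.div (ContinuousAt.mul this.continuousAt
        (ContinuousAt.div (by fun_prop) (by fun_prop) h2)) (by fun_prop) hn)
        (ContinuousAt.inv₀ (by fun_prop) h1)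
  rw [integral_polar hn hI, ← integral_neg]
  congr 1
  funext ξ
  have hξ : ‖(ξ : En n)‖ = 1 := by simp
  rw [← radial_ibp hu2 hk hk' ha hab hb hka hkb ξ]
  refine setIntegral_congr_fun measurableSet_Ioi fun r hr => ?_
  have hr : 0 < r := hr
  simp only [norm_smul, hξ, mul_one, Real.norm_eq_abs, abs_of_pos hr, map_smul]
  rcases lt_or_ge r b with hrb | hrb
  · have h1 : 0 < 1 - r ^ 2 := by nlinarith
    rw [smul_smul, smul_smul]
    congr 1
    field_simp
  · rw [hkb r hrb]; simp

/-! ### The cutoff and its limit on the sphere -/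

/-- A smooth cutoff on the line, equal to `1` on `[2/j, 1-2/j]` and to `0` for `r ≤ 1/j` and for
`r ≥ 1-1/j` (for `j ≥ 4`). -/
noncomputable def cutoff (j r : ℝ) : ℝ :=
  Real.smoothTransition (j * r - 1) - Real.smoothTransition (j * r - (j - 2))

/-- The derivative of `cutoff j`: a positive bump of mass one in `[1/j, 2/j]` minus one in
`[1-2/j, 1-1/j]`. -/
noncomputable def cutoffDeriv (j r : ℝ) : ℝ :=
  deriv Real.smoothTransition (j * r - 1) * j - deriv Real.smoothTransition (j * r - (j - 2)) * j

theorem hasDerivAt_cutoff (j r : ℝ) : HasDerivAt (cutoff j) (cutoffDeriv j r) r := by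
  have hs : ∀ t, HasDerivAt Real.smoothTransition (deriv Real.smoothTransition t) t := fun t =>
    ((Real.smoothTransition.contDiff (n := 1)).differentiable one_ne_zero t).hasDerivAt
  have hl : ∀ c, HasDerivAt (fun r : ℝ => j * r - c) j r := fun c => by
    simpa using ((hasDerivAt_id r).const_mul j).sub_const c
  exact ((hs _).comp r (hl 1)).sub ((hs _).comp r (hl (j - 2)))

theorem continuous_deriv_smoothTransition : Continuous (deriv Real.smoothTransition) :=
  (Real.smoothTransition.contDiff (n := 1)).continuous_deriv le_rfl

theorem continuous_cutoffDeriv (j : ℝ) : Continuous (cutoffDeriv j) := by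
  have := continuous_deriv_smoothTransition
  unfold cutoffDeriv
  fun_prop

theorem cutoff_left {j r : ℝ} (hj : 4 ≤ j) (hr : r ≤ 1 / j) : cutoff j r = 0 := by
  have h : j * r ≤ 1 := by
    have := mul_le_mul_of_nonneg_left hr (by linarith : 0 ≤ j)
    rwa [mul_one_div_cancel (by linarith)] at this
  rw [cutoff, Real.smoothTransition.zero_of_nonpos (by linarith),
    Real.smoothTransition.zero_of_nonpos (by linarith), sub_zero]

theorem cutoff_right {j r : ℝ} (hj : 4 ≤ j) (hr : 1 - 1 / j ≤ r) : cutoff j r = 0 := by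
  have h : j - 1 ≤ j * r := by
    have := mul_le_mul_of_nonneg_left hr (by linarith : 0 ≤ j)
    rwa [mul_sub, mul_one_div_cancel (by linarith), mul_one] at this
  rw [cutoff, Real.smoothTransition.one_of_one_le (by linarith),
    Real.smoothTransition.one_of_one_le (by linarith), sub_self]

theorem abs_cutoff_le {j : ℝ} (r : ℝ) : |cutoff j r| ≤ 1 := by
  have h1 := Real.smoothTransition.nonneg (j * r - 1)
  have h2 := Real.smoothTransition.le_one (j * r - 1)
  have h3 := Real.smoothTransition.nonneg (j * r - (j - 2))
  have h4 := Real.smoothTransition.le_one (j * r - (j - 2))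
  rw [cutoff, abs_le]
  constructor <;> linarith

theorem cutoff_eventually_one {r : ℝ} (h0 : 0 < r) (h1 : r < 1) :
    ∀ᶠ m : ℕ in atTop, cutoff ((m : ℝ) + 4) r = 1 := by
  have hp : 0 < 1 - r := by linarith
  filter_upwards [eventually_ge_atTop (⌈2 / r⌉₊ + ⌈2 / (1 - r)⌉₊)] with m hm
  have hm' : (⌈2 / r⌉₊ : ℝ) + ⌈2 / (1 - r)⌉₊ ≤ m := by exact_mod_cast hm
  have ha := Nat.le_ceil (2 / r)
  have hb := Nat.le_ceil (2 / (1 - r))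
  have ha0 : (0 : ℝ) ≤ ⌈2 / r⌉₊ := Nat.cast_nonneg _
  have hb0 : (0 : ℝ) ≤ ⌈2 / (1 - r)⌉₊ := Nat.cast_nonneg _
  have h2 : 2 / r ≤ (m : ℝ) + 4 := by linarith
  have h3 : 2 / (1 - r) ≤ (m : ℝ) + 4 := by linarith
  rw [div_le_iff₀ h0] at h2
  rw [div_le_iff₀ hp] at h3
  rw [cutoff, Real.smoothTransition.one_of_one_le (by linarith),
    Real.smoothTransition.zero_of_nonpos (by linarith), sub_zero]

theorem deriv_smoothTransition_eq_zero {t : ℝ} (ht : t ∉ Ioc (0 : ℝ) 1) :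
    deriv Real.smoothTransition t = 0 := by
  rcases le_or_gt t 0 with h | h
  · refine IsLocalMin.deriv_eq_zero (Eventually.of_forall fun s => ?_)
    rw [Real.smoothTransition.zero_of_nonpos h]
    exact Real.smoothTransition.nonneg s
  · have h1 : 1 ≤ t := by
      by_contra h1
      exact ht ⟨h, (not_le.1 h1).le⟩
    refine IsLocalMax.deriv_eq_zero (Eventually.of_forall fun s => ?_)
    rw [Real.smoothTransition.one_of_one_le h1]
    exact Real.smoothTransition.le_one s

theorem integral_deriv_smoothTransition :
    ∫ t in (0 : ℝ)..1, deriv Real.smoothTransition t = 1 := by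
  rw [intervalIntegral.integral_deriv_eq_sub
    (fun t _ => (Real.smoothTransition.contDiff (n := 1)).differentiable one_ne_zero t)
    (continuous_deriv_smoothTransition.intervalIntegrable _ _)]
  simp

/-- A bump of width `1/j` and mass one located at `[c/j, (c+1)/j] ⊆ [0, 1]`, rescaled to the unit
interval. -/
theorem integral_rescale {n : ℕ} {j c : ℝ} (hj : 4 ≤ j) (hc : 0 ≤ c) (hc' : c ≤ j - 1)
    (v : ℝ → En n) :
    ∫ r in (0 : ℝ)..1, (deriv Real.smoothTransition (j * r - c) * j) • v r
      = ∫ t in (0 : ℝ)..1, deriv Real.smoothTransition t • v ((t + c) / j) := by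
  have hj0 : j ≠ 0 := by linarith
  have h1 := intervalIntegral.integral_comp_mul_sub (a := 0) (b := 1)
    (fun t => deriv Real.smoothTransition t • v ((t + c) / j)) hj0 c
  have h2 : ∫ r in (0 : ℝ)..1, (deriv Real.smoothTransition (j * r - c) * j) • v r
      = j • ∫ r in (0 : ℝ)..1, deriv Real.smoothTransition (j * r - c)
        • v ((j * r - c + c) / j) := by
    rw [← intervalIntegral.integral_smul]
    congr 1
    funext r
    rw [smul_smul, mul_comm, sub_add_cancel, mul_div_cancel_left₀ _ hj0]
  rw [h2, h1, smul_smul, mul_inv_cancel₀ hj0, one_smul]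
  have hsupp : Function.support (fun t => deriv Real.smoothTransition t • v ((t + c) / j))
      ⊆ Ioc 0 1 := by
    intro t ht
    by_contra h
    exact ht (by simp [deriv_smoothTransition_eq_zero h])
  rw [intervalIntegral.integral_eq_integral_of_support_subset hsupp,
    intervalIntegral.integral_eq_integral_of_support_subset
      (hsupp.trans (Ioc_subset_Ioc (by linarith) (by linarith)))]

theorem integral_cutoffDeriv {n : ℕ} {j : ℝ} (hj : 4 ≤ j) {v : ℝ → En n} (hv : Continuous v) :
    ∫ r in (0 : ℝ)..1, cutoffDeriv j r • v r
      = ∫ t in (0 : ℝ)..1, deriv Real.smoothTransition t •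
          (v ((t + 1) / j) - v ((t + (j - 2)) / j)) := by
  have hα := continuous_deriv_smoothTransition
  simp only [cutoffDeriv, sub_smul, smul_sub]
  rw [intervalIntegral.integral_sub (by apply Continuous.intervalIntegrable; fun_prop)
      (by apply Continuous.intervalIntegrable; fun_prop),
    intervalIntegral.integral_sub (by apply Continuous.intervalIntegrable; fun_prop)
      (by apply Continuous.intervalIntegrable; fun_prop),
    integral_rescale hj zero_le_one (by linarith),
    integral_rescale hj (by linarith) (by linarith)]

/-- As `j → ∞` the measures `cutoffDeriv j r dr` tend to `δ₀ - δ₁`. Only continuity of `u` up to the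
boundary is used. -/
theorem sphere_limit {n : ℕ} {u : En n → En n}
    (huc : ContinuousOn u (closedBall (0 : En n) 1)) :
    Tendsto (fun m : ℕ => ∫ ξ : sphere (0 : En n) 1,
        (∫ r in (0 : ℝ)..1, cutoffDeriv ((m : ℝ) + 4) r • u (r • (ξ : En n)))
        ∂(volume : Measure (En n)).toSphere) atTop
      (𝓝 (∫ ξ : sphere (0 : En n) 1, (u 0 - u ξ) ∂(volume : Measure (En n)).toSphere)) := by
  -- A globally continuous function agreeing with `u` on the closed ball.
  set w : En n → En n := fun x => u ((max 1 ‖x‖)⁻¹ • x) with hw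
  have hmax : ∀ x : En n, 0 < max 1 ‖x‖ := fun x => lt_max_of_lt_left one_pos
  have hmaps : ∀ x : En n, (max 1 ‖x‖)⁻¹ • x ∈ closedBall (0 : En n) 1 := by
    intro x
    rw [mem_closedBall_zero_iff, norm_smul, norm_inv, Real.norm_eq_abs, abs_of_pos (hmax x),
      inv_mul_le_iff₀ (hmax x), mul_one]
    exact le_max_right _ _
  have hwc : Continuous w := by
    refine huc.comp_continuous (Continuous.smul (Continuous.inv₀ (by fun_prop)
      fun x => (hmax x).ne') continuous_id) hmaps
  have hwu : ∀ x ∈ closedBall (0 : En n) 1, w x = u x := by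
    intro x hx
    have : max 1 ‖x‖ = 1 := max_eq_left (by simpa using hx)
    simp [hw, this]
  have hξ : ∀ ξ : sphere (0 : En n) 1, ‖(ξ : En n)‖ = 1 := fun ξ => by simp
  obtain ⟨C, hC⟩ := (isCompact_closedBall (0 : En n) 1).exists_bound_of_continuousOn huc
  have hwC : ∀ x, ‖w x‖ ≤ C := fun x => hC _ (hmaps x)
  have hα := continuous_deriv_smoothTransition
  obtain ⟨A, hA⟩ := (isCompact_Icc (a := (0 : ℝ)) (b := 1)).exists_bound_of_continuousOn
    hα.continuousOn
  have key : ∀ m : ℕ, ∀ ξ : sphere (0 : En n) 1,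
      ∫ r in (0 : ℝ)..1, cutoffDeriv ((m : ℝ) + 4) r • u (r • (ξ : En n))
      = ∫ t in (0 : ℝ)..1, deriv Real.smoothTransition t •
        (w (((t + 1) / ((m : ℝ) + 4)) • (ξ : En n))
          - w (((t + ((m : ℝ) + 4 - 2)) / ((m : ℝ) + 4)) • (ξ : En n))) := by
    intro m ξ
    have hm : (0 : ℝ) ≤ m := Nat.cast_nonneg m
    rw [← integral_cutoffDeriv (v := fun r => w (r • (ξ : En n))) (by linarith) (by fun_prop)]
    refine intervalIntegral.integral_congr fun r hr => ?_
    rw [uIcc_of_le zero_le_one] at hr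
    rw [hwu]
    rw [mem_closedBall_zero_iff, norm_smul, hξ, mul_one, Real.norm_eq_abs, abs_of_nonneg hr.1]
    exact hr.2
  simp only [key]
  refine tendsto_integral_of_dominated_convergence (fun _ => A * (C + C)) ?_ (integrable_const _)
    ?_ ?_
  · intro m
    apply Continuous.aestronglyMeasurable
    apply intervalIntegral.continuous_parametric_intervalIntegral_of_continuous'
    unfold Function.uncurry
    fun_prop
  · intro m
    refine Eventually.of_forall fun ξ => ?_
    have := intervalIntegral.norm_integral_le_of_norm_le_const (a := 0) (b := 1) (C := A * (C + C))
      (f := fun t => deriv Real.smoothTransition t •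
        (w (((t + 1) / ((m : ℝ) + 4)) • (ξ : En n))
          - w (((t + ((m : ℝ) + 4 - 2)) / ((m : ℝ) + 4)) • (ξ : En n)))) ?_
    · simpa using this
    · intro t ht
      rw [uIoc_of_le zero_le_one] at ht
      have h1 := hA t (Ioc_subset_Icc_self ht)
      rw [norm_smul]
      exact mul_le_mul h1 ((norm_sub_le _ _).trans (add_le_add (hwC _) (hwC _)))
        (norm_nonneg _) ((norm_nonneg _).trans h1)
  · refine Eventually.of_forall fun ξ => ?_
    have hlim : u 0 - u ξ = ∫ t in (0 : ℝ)..1, deriv Real.smoothTransition t •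
        (w 0 - w (ξ : En n)) := by
      rw [intervalIntegral.integral_smul_const, integral_deriv_smoothTransition, one_smul,
        hwu 0 (by simp), hwu ξ (by simp)]
    rw [hlim]
    have hinv : Tendsto (fun m : ℕ => ((m : ℝ) + 4)⁻¹) atTop (𝓝 0) :=
      (tendsto_natCast_atTop_atTop.atTop_add tendsto_const_nhds).inv_tendsto_atTop
    refine intervalIntegral.tendsto_integral_filter_of_dominated_convergence
      (fun _ => A * (C + C)) ?_ ?_ (by simp) ?_
    · refine Eventually.of_forall fun m => Continuous.aestronglyMeasurable ?_
      fun_prop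
    · refine Eventually.of_forall fun m => Eventually.of_forall fun t ht => ?_
      rw [uIoc_of_le zero_le_one] at ht
      have h1 := hA t (Ioc_subset_Icc_self ht)
      rw [norm_smul]
      exact mul_le_mul h1 ((norm_sub_le _ _).trans (add_le_add (hwC _) (hwC _)))
        (norm_nonneg _) ((norm_nonneg _).trans h1)
    · refine Eventually.of_forall fun t _ => Tendsto.const_smul (Tendsto.sub ?_ ?_) _
      · refine (hwc.tendsto 0).comp ?_
        have : Tendsto (fun m : ℕ => ((t + 1) * ((m : ℝ) + 4)⁻¹) • (ξ : En n)) atTop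
            (𝓝 (((t + 1) * 0) • (ξ : En n))) := (hinv.const_mul _).smul_const _
        simpa [div_eq_mul_inv] using this
      · refine (hwc.tendsto ξ).comp ?_
        have : Tendsto (fun m : ℕ => (1 + (t - 2) * ((m : ℝ) + 4)⁻¹) • (ξ : En n)) atTop
            (𝓝 ((1 + (t - 2) * 0) • (ξ : En n))) := ((hinv.const_mul _).const_add _).smul_const _
        simp only [mul_zero, add_zero, one_smul] at this
        refine this.congr fun m => ?_
        congr 1
        have hm : (m : ℝ) + 4 ≠ 0 := by positivity
        field_simp
        ring

/-! ### The truncated Green function -/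

/-- The integrand of the Green function: `g(r) = (1/n) ∫_r^1 greenDensity n s ds`. -/
noncomputable def greenDensity (n : ℕ) (s : ℝ) : ℝ := (1 - s ^ 2) ^ (n - 2) / s ^ (n - 1)

/-- The Green function (without the factor `1/n`) with its integrand cut off away from `0` and `1`, so
that it is `C¹`, constant near `0` and zero near `1`. -/
noncomputable def cutGreen (n : ℕ) (j r : ℝ) : ℝ :=
  ∫ s in r..(1 : ℝ), cutoff j s * greenDensity n s

theorem continuous_cutoff (j : ℝ) : Continuous (cutoff j) :=
  continuous_iff_continuousAt.2 fun r => (hasDerivAt_cutoff j r).continuousAt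

theorem continuous_cut_density {n : ℕ} {j : ℝ} (hj : 4 ≤ j) :
    Continuous fun s => cutoff j s * greenDensity n s := by
  rw [continuous_iff_continuousAt]
  intro s
  rcases eq_or_ne s 0 with rfl | hs
  · have hev : (fun s => cutoff j s * greenDensity n s) =ᶠ[𝓝 0] fun _ => 0 := by
      have : (0 : ℝ) < 1 / j := by positivity
      filter_upwards [Iio_mem_nhds this] with y hy
      rw [cutoff_left hj (le_of_lt hy), zero_mul]
    exact continuousAt_const.congr hev.symm
  · exact (continuous_cutoff j).continuousAt.mul
      (ContinuousAt.div (by fun_prop) (by fun_prop) (pow_ne_zero _ hs))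

theorem hasDerivAt_cutGreen {n : ℕ} {j : ℝ} (hj : 4 ≤ j) (r : ℝ) :
    HasDerivAt (cutGreen n j) (-(cutoff j r * greenDensity n r)) r :=
  intervalIntegral.integral_hasDerivAt_left ((continuous_cut_density hj).intervalIntegrable _ _)
    ((continuous_cut_density hj).stronglyMeasurableAtFilter _ _)
    (continuous_cut_density hj).continuousAt

theorem cutGreen_right {n : ℕ} {j r : ℝ} (hj : 4 ≤ j) (hr : 1 - 1 / j ≤ r) :
    cutGreen n j r = 0 := by
  have h1 : 1 - 1 / j ≤ 1 := by
    have : 0 ≤ 1 / j := by positivity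
    linarith
  have : EqOn (fun s => cutoff j s * greenDensity n s) (fun _ => 0) (uIcc r 1) := by
    intro s hs
    have : 1 - 1 / j ≤ s := (le_min hr h1).trans hs.1
    simp only
    rw [cutoff_right hj this, zero_mul]
  rw [cutGreen, intervalIntegral.integral_congr this]
  simp

theorem abs_density_le {n : ℕ} {r s : ℝ} (hr : 0 < r) (hrs : r ≤ s) (hs : s ≤ 1) :
    |greenDensity n s| ≤ (1 - r ^ 2) ^ (n - 2) / r ^ (n - 1) := by
  have h1 : 0 ≤ 1 - s ^ 2 := by nlinarith
  have h2 : 1 - s ^ 2 ≤ 1 - r ^ 2 := by nlinarith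
  have hs0 : 0 < s := hr.trans_le hrs
  have h3 : 0 ≤ (1 - r ^ 2) ^ (n - 2) := pow_nonneg (h1.trans h2) _
  rw [greenDensity, abs_of_nonneg (by positivity)]
  gcongr

/-- A bound uniform in `j`: the integrand is at most its value at the left end `r`, and
`1 - r ≤ 1 - r²`. -/
theorem abs_cutGreen_le {n : ℕ} (hn : 3 ≤ n) {j r : ℝ} (hr : 0 < r) (hr1 : r < 1) :
    |cutGreen n j r| ≤ (1 - r ^ 2) ^ (n - 1) / r ^ (n - 1) := by
  have hp : 0 < 1 - r ^ 2 := by nlinarith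
  have h := intervalIntegral.norm_integral_le_of_norm_le_const (a := r) (b := 1)
    (C := (1 - r ^ 2) ^ (n - 2) / r ^ (n - 1)) (f := fun s => cutoff j s * greenDensity n s) ?_
  · rw [Real.norm_eq_abs, abs_of_pos (sub_pos.2 hr1)] at h
    refine h.trans ?_
    have : 1 - r ≤ 1 - r ^ 2 := by nlinarith
    calc (1 - r ^ 2) ^ (n - 2) / r ^ (n - 1) * (1 - r)
        ≤ (1 - r ^ 2) ^ (n - 2) / r ^ (n - 1) * (1 - r ^ 2) := by gcongr
      _ = (1 - r ^ 2) ^ (n - 1) / r ^ (n - 1) := by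
        rw [show n - 1 = (n - 2) + 1 by omega, pow_succ (1 - r ^ 2)]
        ring
  · intro s hs
    rw [uIoc_of_le hr1.le] at hs
    rw [norm_mul, Real.norm_eq_abs, Real.norm_eq_abs]
    calc |cutoff j s| * |greenDensity n s| ≤ 1 * |greenDensity n s| := by
          gcongr; exact abs_cutoff_le s
      _ ≤ _ := by rw [one_mul]; exact abs_density_le hr hs.1.le hs.2

theorem tendsto_cutGreen {n : ℕ} {r : ℝ} (hr : 0 < r) (hr1 : r < 1) :
    Tendsto (fun m : ℕ => cutGreen n ((m : ℝ) + 4) r) atTop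
      (𝓝 (∫ s in r..(1 : ℝ), greenDensity n s)) := by
  refine intervalIntegral.tendsto_integral_filter_of_dominated_convergence
    (fun _ => (1 - r ^ 2) ^ (n - 2) / r ^ (n - 1)) ?_ ?_ (by simp) ?_
  · refine Eventually.of_forall fun m => Continuous.aestronglyMeasurable ?_
    exact continuous_cut_density (by have : (0 : ℝ) ≤ m := Nat.cast_nonneg m
                                     linarith)
  · refine Eventually.of_forall fun m => Eventually.of_forall fun s hs => ?_
    rw [uIoc_of_le hr1.le] at hs
    rw [norm_mul, Real.norm_eq_abs, Real.norm_eq_abs]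
    calc |cutoff ((m : ℝ) + 4) s| * |greenDensity n s| ≤ 1 * |greenDensity n s| := by
          gcongr; exact abs_cutoff_le s
      _ ≤ _ := by rw [one_mul]; exact abs_density_le hr hs.1.le hs.2
  · have h1 : ∀ᵐ s : ℝ, s ≠ 1 := by simp [ae_iff]
    filter_upwards [h1] with s hs1 hs
    rw [uIoc_of_le hr1.le] at hs
    have hlt : s < 1 := lt_of_le_of_ne hs.2 hs1
    refine tendsto_const_nhds.congr' ?_
    filter_upwards [cutoff_eventually_one (hr.trans hs.1) hlt] with m hm
    rw [hm, one_mul]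

/-! ### Passage to the limit in the volume integral -/

theorem setLIntegral_tau {n : ℕ} (f : En n → ENNReal) :
    ∫⁻ x in ball (0 : En n) 1, f x ∂(tauMeasure n)
      = (volume (ball (0 : En n) 1))⁻¹ * ∫⁻ x in ball (0 : En n) 1,
          ENNReal.ofReal ((1 - ‖x‖ ^ 2) ^ n)⁻¹ * f x := by
  have hmeas : Measurable fun x : En n => ENNReal.ofReal ((1 - ‖x‖ ^ 2) ^ n)⁻¹ := by fun_prop
  rw [tauMeasure, setLIntegral_withDensity_eq_setLIntegral_mul_non_measurable _ hmeas
    _ measurableSet_ball (Eventually.of_forall fun x => ENNReal.ofReal_lt_top)]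
  rw [nuMeasure, Measure.restrict_smul, lintegral_smul_measure]
  rfl

theorem setIntegral_tau {n : ℕ} (f : En n → En n) :
    ∫ x in ball (0 : En n) 1, f x ∂(tauMeasure n)
      = (volume.real (ball (0 : En n) 1))⁻¹ • ∫ x in ball (0 : En n) 1,
          ((1 - ‖x‖ ^ 2) ^ n)⁻¹ • f x := by
  have hmeas : Measurable fun x : En n => ENNReal.ofReal ((1 - ‖x‖ ^ 2) ^ n)⁻¹ := by fun_prop
  rw [tauMeasure, setIntegral_withDensity_eq_setIntegral_toReal_smul hmeas
    (Eventually.of_forall fun x => ENNReal.ofReal_lt_top) _ measurableSet_ball]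
  rw [nuMeasure, Measure.restrict_smul, integral_smul_measure, ENNReal.toReal_inv]
  congr 1
  refine setIntegral_congr_fun measurableSet_ball fun x hx => ?_
  have := one_sub_normSq_pos hx
  rw [ENNReal.toReal_ofReal (by positivity)]

/-- The hypothesis on `ψ`, rewritten with respect to Lebesgue measure:
`(1-|x|²)^{n-1} dτ` is `(1-|x|²)^{-1} dx` up to a constant. -/
theorem integrableOn_weighted {n : ℕ} (hn : 3 ≤ n) {ψ : En n → En n}
    (hψc : ContinuousOn ψ (ball (0 : En n) 1))
    (hfin : ∫⁻ x in ball (0 : En n) 1,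
        ENNReal.ofReal ((1 - ‖x‖ ^ 2) ^ (n - 1) * ‖ψ x‖) ∂(tauMeasure n) ≠ ⊤) :
    IntegrableOn (fun x => (1 - ‖x‖ ^ 2)⁻¹ * ‖ψ x‖) (ball (0 : En n) 1) := by
  constructor
  · refine ContinuousOn.aestronglyMeasurable ?_ measurableSet_ball
    refine ContinuousOn.mul (ContinuousOn.inv₀ (by fun_prop) fun x hx => ?_) hψc.norm
    exact (one_sub_normSq_pos hx).ne'
  · rw [setLIntegral_tau] at hfin
    have hc0 : (volume (ball (0 : En n) 1))⁻¹ ≠ 0 := by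
      simpa using measure_ball_lt_top.ne
    have h1 : ∫⁻ x in ball (0 : En n) 1, ENNReal.ofReal ((1 - ‖x‖ ^ 2) ^ n)⁻¹ *
        ENNReal.ofReal ((1 - ‖x‖ ^ 2) ^ (n - 1) * ‖ψ x‖) ≠ ⊤ := fun h => by
      rw [h, ENNReal.mul_top hc0] at hfin
      exact hfin rfl
    rw [hasFiniteIntegral_iff_norm]
    refine lt_of_eq_of_lt ?_ h1.lt_top
    refine setLIntegral_congr_fun measurableSet_ball fun x hx => ?_
    have hp := one_sub_normSq_pos hx
    rw [← ENNReal.ofReal_mul (by positivity), Real.norm_eq_abs, abs_of_nonneg (by positivity)]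
    congr 1
    obtain ⟨m, rfl⟩ : ∃ m, n = m + 1 := ⟨n - 1, by omega⟩
    rw [Nat.add_sub_cancel]
    field_simp
    ring

/-- The bound `|x|^{1-n} (1-|x|²)^{-1} |ψ|` for the Green potential is dominated by an integrable
function: for `|x| ≤ 1/2` by the locally integrable `|x|^{1-n}`, as `ψ` is bounded there, and for
`|x| > 1/2` by the weighted integrability of `ψ`. -/
theorem exists_dominating {n : ℕ} (hn : 3 ≤ n) {ψ : En n → En n}
    (hψc : ContinuousOn ψ (ball (0 : En n) 1))
    (hI : IntegrableOn (fun x => (1 - ‖x‖ ^ 2)⁻¹ * ‖ψ x‖) (ball (0 : En n) 1)) :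
    ∃ D : En n → ℝ, IntegrableOn D (ball (0 : En n) 1) ∧ ∀ x ∈ ball (0 : En n) 1, x ≠ 0 →
      (‖x‖ ^ (n - 1))⁻¹ * ((1 - ‖x‖ ^ 2)⁻¹ * ‖ψ x‖) ≤ D x := by
  have : Nontrivial (Fin n) := Fin.nontrivial_iff_two_le.2 (by omega)
  obtain ⟨M, hM⟩ := (isCompact_closedBall (0 : En n) (1 / 2)).exists_bound_of_continuousOn
    (hψc.mono (closedBall_subset_ball (by norm_num)))
  have hM0 : 0 ≤ M := (norm_nonneg _).trans (hM 0 (by simp))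
  refine ⟨fun x => (2 * M) * (‖x‖ ^ (n - 1))⁻¹ + 2 ^ (n - 1) * ((1 - ‖x‖ ^ 2)⁻¹ * ‖ψ x‖),
    Integrable.add (Integrable.const_mul ?_ _) (Integrable.const_mul hI _), ?_⟩
  · change IntegrableOn (fun x : En n => (fun r : ℝ => (r ^ (n - 1))⁻¹) ‖x‖) (ball (0 : En n) 1)
    refine (integrableOn_fun_norm_addHaar (volume : Measure (En n))
      (f := fun r : ℝ => (r ^ (n - 1))⁻¹) (r := 1)).2 ?_
    rw [finrank_euclideanSpace_fin]
    have hone : IntegrableOn (fun _ : ℝ => (1 : ℝ)) (Ioo 0 1) := by simp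
    refine hone.congr_fun (fun r hr => ?_) measurableSet_Ioo
    have : r ^ (n - 1) ≠ 0 := pow_ne_zero _ hr.1.ne'
    simp [this]
  · intro x hx hx0
    have hp := one_sub_normSq_pos hx
    have hn0 : 0 < ‖x‖ := norm_pos_iff.2 hx0
    rcases le_or_gt ‖x‖ (1 / 2) with h | h
    · have h1 : (1 - ‖x‖ ^ 2)⁻¹ ≤ 2 := by
        rw [inv_le_comm₀ hp two_pos]
        nlinarith
      have h2 := hM x (by simpa using h)
      have h3 : (1 - ‖x‖ ^ 2)⁻¹ * ‖ψ x‖ ≤ 2 * M := by gcongr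
      have h4 : 0 ≤ 2 ^ (n - 1) * ((1 - ‖x‖ ^ 2)⁻¹ * ‖ψ x‖) := by positivity
      have h5 := mul_le_mul_of_nonneg_left h3 (by positivity : 0 ≤ (‖x‖ ^ (n - 1))⁻¹)
      linarith
    · have h1 : (‖x‖ ^ (n - 1))⁻¹ ≤ 2 ^ (n - 1) := by
        rw [← inv_pow]
        refine pow_le_pow_left₀ (by positivity) ?_ _
        rw [inv_le_comm₀ hn0 two_pos]
        linarith
      have h2 : 0 ≤ (1 - ‖x‖ ^ 2)⁻¹ * ‖ψ x‖ := by positivity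
      have h3 := mul_le_mul_of_nonneg_right h1 h2
      have h4 : 0 ≤ (2 * M) * (‖x‖ ^ (n - 1))⁻¹ := by positivity
      linarith

/-- The potentials of `ψ` with cut-off Green functions converge to the full one. -/
theorem volume_limit {n : ℕ} (hn : 3 ≤ n) {ψ : En n → En n}
    (hψc : ContinuousOn ψ (ball (0 : En n) 1))
    (hI : IntegrableOn (fun x => (1 - ‖x‖ ^ 2)⁻¹ * ‖ψ x‖) (ball (0 : En n) 1)) :
    Tendsto (fun m : ℕ => ∫ x in ball (0 : En n) 1,
        (cutGreen n ((m : ℝ) + 4) ‖x‖ * ((1 - ‖x‖ ^ 2) ^ n)⁻¹) • ψ x) atTop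
      (𝓝 (∫ x in ball (0 : En n) 1,
        ((∫ s in ‖x‖..(1 : ℝ), greenDensity n s) * ((1 - ‖x‖ ^ 2) ^ n)⁻¹) • ψ x)) := by
  have : Nontrivial (Fin n) := Fin.nontrivial_iff_two_le.2 (by omega)
  obtain ⟨D, hD, hbound⟩ := exists_dominating hn hψc hI
  have hne : ∀ᵐ x : En n ∂(volume.restrict (ball (0 : En n) 1)), x ≠ 0 :=
    ae_restrict_of_ae (Measure.ae_ne _ _)
  refine tendsto_integral_of_dominated_convergence D ?_ hD ?_ ?_
  · intro m
    refine ContinuousOn.aestronglyMeasurable ?_ measurableSet_ball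
    have hX : Continuous (cutGreen n ((m : ℝ) + 4)) :=
      continuous_iff_continuousAt.2 fun r => (hasDerivAt_cutGreen
        (by have : (0 : ℝ) ≤ m := Nat.cast_nonneg m
            linarith) r).continuousAt
    refine ContinuousOn.smul (ContinuousOn.mul (hX.comp continuous_norm).continuousOn
      (ContinuousOn.inv₀ (by fun_prop) fun x hx => ?_)) hψc
    have := one_sub_normSq_pos hx
    positivity
  · intro m
    filter_upwards [hne, ae_restrict_mem measurableSet_ball] with x hx0 hx
    refine le_trans ?_ (hbound x hx hx0)
    have hp := one_sub_normSq_pos hx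
    have hn0 : 0 < ‖x‖ := norm_pos_iff.2 hx0
    have h1 := abs_cutGreen_le hn (j := (m : ℝ) + 4) hn0 (by simpa using hx)
    rw [norm_smul, norm_mul, Real.norm_eq_abs, Real.norm_eq_abs, abs_of_nonneg
      (by positivity : 0 ≤ ((1 - ‖x‖ ^ 2) ^ n)⁻¹), ← mul_assoc]
    refine mul_le_mul_of_nonneg_right ?_ (norm_nonneg _)
    refine (mul_le_mul_of_nonneg_right h1 (by positivity)).trans (le_of_eq ?_)
    obtain ⟨m, rfl⟩ : ∃ m, n = m + 1 := ⟨n - 1, by omega⟩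
    rw [Nat.add_sub_cancel]
    field_simp
    ring
  · filter_upwards [hne, ae_restrict_mem measurableSet_ball] with x hx0 hx
    exact ((tendsto_cutGreen (norm_pos_iff.2 hx0) (by simpa using hx)).mul_const _).smul_const _

/-! ### The value at the origin -/

/-- value at the origin:
`u(0) = ∫_{𝕊ⁿ⁻¹} φ dσ − ∫_{𝔹ⁿ} g(|x|) ψ(x) dτ(x)`. -/
theorem stmt_8 (n : ℕ) (hn : 3 ≤ n) (u ψ φ : En n → En n)
    (hu2 : ContDiffOn ℝ 2 u (ball (0 : En n) 1))
    (huc : ContinuousOn u (closedBall (0 : En n) 1))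
    (hψc : ContinuousOn ψ (ball (0 : En n) 1))
    (heq : ∀ x ∈ ball (0 : En n) 1, hypLap n u x = ψ x)
    (hbd : ∀ ξ ∈ sphere (0 : En n) 1, u ξ = φ ξ)
    (μ₁ : ℝ) (hμ₁ : 0 ≤ μ₁)
    (hint : ∫⁻ x in ball (0 : En n) 1,
        ENNReal.ofReal ((1 - ‖x‖ ^ 2) ^ (n - 1) * ‖ψ x‖) ∂(tauMeasure n)
          ≤ ENNReal.ofReal μ₁) :
    u 0 = (∫ ξ, φ (ξ : En n) ∂(sigmaMeasure n))
        - ∫ x in ball (0 : En n) 1, gfun n ‖x‖ • ψ x ∂(tauMeasure n) := by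
  have hI := integrableOn_weighted hn hψc (hint.trans_lt ENNReal.ofReal_lt_top).ne
  have hid : ∀ m : ℕ, ∫ x in ball (0 : En n) 1,
        (cutGreen n ((m : ℝ) + 4) ‖x‖ * ((1 - ‖x‖ ^ 2) ^ n)⁻¹) • ψ x
      = -∫ ξ : sphere (0 : En n) 1,
        (∫ r in (0 : ℝ)..1, cutoffDeriv ((m : ℝ) + 4) r • u (r • (ξ : En n)))
        ∂(volume : Measure (En n)).toSphere := by
    intro m
    have hj : (4 : ℝ) ≤ (m : ℝ) + 4 := by
      have : (0 : ℝ) ≤ m := Nat.cast_nonneg m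
      linarith
    have hj0 : (0 : ℝ) < (m : ℝ) + 4 := by linarith
    have ha : 0 < 1 / ((m : ℝ) + 4) := by positivity
    have ha4 : 1 / ((m : ℝ) + 4) ≤ 1 / 4 := one_div_le_one_div_of_le four_pos hj
    have hb : 1 - 1 / ((m : ℝ) + 4) < 1 := by linarith
    rw [← gradient_integral hn hu2 (hasDerivAt_cutoff _) (continuous_cutoffDeriv _) ha
      (by linarith) hb (fun r hr => cutoff_left hj hr) (fun r hr => cutoff_right hj hr)]
    refine Eq.trans ?_ (weak_form hn hu2 hψc heq (hasDerivAt_cutGreen hj)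
      (continuous_cut_density hj) ha hb (fun r hr => by rw [cutoff_left hj hr, zero_mul])
      (fun r hr => by rw [cutoff_right hj hr, zero_mul]) (fun r hr => cutGreen_right hj hr))
    refine setIntegral_eq_integral_of_forall_compl_eq_zero fun x hx => ?_
    have h1 : 1 ≤ ‖x‖ := by simpa using hx
    rw [cutGreen_right hj (by linarith)]
    simp
  -- `hlim` is the claim before normalization: both sides of `hid` have a limit as the cutoff opens.
  have hlim := tendsto_nhds_unique (volume_limit hn hψc hI)
    ((sphere_limit huc).neg.congr fun m => (hid m).symm)
  have hV : 0 < volume.real (ball (0 : En n) 1) :=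
    ENNReal.toReal_pos (measure_ball_pos _ _ one_pos).ne' measure_ball_lt_top.ne
  have hn0 : (n : ℝ) ≠ 0 := by positivity
  have hsph : Integrable (fun ξ : sphere (0 : En n) 1 => u ξ)
      (volume : Measure (En n)).toSphere := by
    have hc : Continuous fun ξ : sphere (0 : En n) 1 => u ξ :=
      huc.comp_continuous continuous_subtype_val fun ξ => sphere_subset_closedBall ξ.2
    exact hc.integrable_of_hasCompactSupport (HasCompactSupport.of_compactSpace _)
  have h1 : ∫ ξ, φ (ξ : En n) ∂(sigmaMeasure n)
      = (n * volume.real (ball (0 : En n) 1))⁻¹ •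
        ∫ ξ : sphere (0 : En n) 1, u ξ ∂(volume : Measure (En n)).toSphere := by
    rw [sigmaMeasure, integral_smul_measure, Measure.toSphere_apply_univ, ENNReal.toReal_inv,
      ENNReal.toReal_mul, finrank_euclideanSpace_fin, ENNReal.toReal_natCast]
    congr 1
    exact integral_congr_ae (Eventually.of_forall fun ξ => (hbd ξ ξ.2).symm)
  have h2 : ∫ x in ball (0 : En n) 1, gfun n ‖x‖ • ψ x ∂(tauMeasure n)
      = (n * volume.real (ball (0 : En n) 1))⁻¹ • ∫ x in ball (0 : En n) 1,
        ((∫ s in ‖x‖..(1 : ℝ), greenDensity n s) * ((1 - ‖x‖ ^ 2) ^ n)⁻¹) • ψ x := by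
    rw [setIntegral_tau, mul_inv, mul_comm (n : ℝ)⁻¹, mul_smul, ← integral_smul (n : ℝ)⁻¹]
    congr 2
    funext x
    rw [smul_smul, smul_smul, gfun]
    congr 1
    simp only [greenDensity]
    ring
  rw [h1, h2, hlim, integral_sub (integrable_const _) hsph, integral_const,
    Measure.toSphere_real_apply_univ, finrank_euclideanSpace_fin, neg_sub, smul_sub, sub_sub_cancel,
    smul_smul, inv_mul_cancel₀ (mul_ne_zero hn0 hV.ne'), one_smul]
end

section
/- Let n ≥ 3, let ω be a majorant, let q ≥ 0 and p be real numbers with p − q − n > 0, let 0 ≤ r < 1, and let ξ₀ = e₁ = (1,0,…,0) ∈ 𝕊ⁿ⁻¹. Then ∫_{𝕊ⁿ⁻¹} |ξ−ξ₀|^q ω(|ξ−ξ₀|) / |ξ − rξ₀|^p dσ(ξ) ≤ α₁ · ω(1−r)/(1−r)^{p+1−q−n} · ( 1/(q+n−1) + 2^p/(p−q−n) ), where α₁ = Γ(n/2) / ( √π · Γ((n−1)/2) ). -/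
/-!
The integrand depends on `ξ` only through `t = ‖ξ - e₁‖` and `‖ξ - r e₁‖`. Since
`‖ξ - r e₁‖ ≥ 1 - r` and `‖ξ - r e₁‖ ≥ t / 2`, and since `ω` is increasing while `ω(t)/t` is
non-increasing, it is at most `ω(1-r) (1-r)^(-p) t^q` for `t ≤ 1 - r` and at most
`ω(1-r) (1-r)⁻¹ 2^p t^(q+1-p)` for `t > 1 - r` (`dist_bounds`, `pointwise_bound`).

It remains to integrate a nonnegative function of `t` over the sphere. With `ξ₀ = cos θ`, the
normalized surface measure pushes forward to `α₁ sin^(n-2) θ dθ` on `(0, π)`, where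
`α₁ = Γ(n/2) / (√π Γ((n-1)/2))`. This slicing formula (`lintegral_sphere`) is proved by computing
the integral over the unit ball of a function of `x₀ / ‖x‖` in two ways: in polar coordinates of
`ℝⁿ`, and by writing `ℝⁿ = ℝ × ℝⁿ⁻¹`, using polar coordinates in `ℝⁿ⁻¹` and then in the
half-plane `(x₀, ρ)`, `ρ > 0`. The constant is the ratio of the areas of the unit spheres of
`ℝⁿ⁻¹` and `ℝⁿ` (`toSphere_ratio`).

Finally `t = 2 sin (θ/2)` gives `sin^(n-2) θ dθ = t^(n-2) cos^(n-3) (θ/2) dt ≤ t^(n-2) dt`, which is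
where `n ≥ 3` is used (`theta_le`), and integrating the two powers of `t` over `(0, 1-r]` and
`(1-r, ∞)` yields the two terms of the bound (`radial_integral`).

All sphere integrals are `ℝ≥0∞`-valued integrals `∫⁻`, so that neither measurability nor
integrability of the original integrand has to be checked; the dimension is written `n = m + 1`.
-/

open MeasureTheory Metric Set

/-! ### Slicing the sphere by the polar angle -/

/-- Polar coordinates for a function that need not be radial. -/
theorem lintegral_polar {E : Type*} [NormedAddCommGroup E] [NormedSpace ℝ E]
    [MeasurableSpace E] [BorelSpace E] [FiniteDimensional ℝ E] [Nontrivial E]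
    (μ : Measure E) [μ.IsAddHaarMeasure] (f : E → ENNReal) (hf : Measurable f) :
    ∫⁻ x, f x ∂μ = ∫⁻ ξ : sphere (0 : E) 1, (∫⁻ s in Ioi (0 : ℝ),
      ENNReal.ofReal (s ^ (Module.finrank ℝ E - 1)) * f (s • (ξ : E))) ∂μ.toSphere := by
  have hm : MeasurableEmbedding (homeomorphUnitSphereProd E) :=
    (homeomorphUnitSphereProd E).measurableEmbedding
  have h1 : Measurable fun z : sphere (0 : E) 1 × Ioi (0 : ℝ) => f ((z.2 : ℝ) • (z.1 : E)) := by
    fun_prop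
  calc ∫⁻ x, f x ∂μ = ∫⁻ x in ({0}ᶜ : Set E), f x ∂μ := by rw [restrict_compl_singleton]
    _ = ∫⁻ x : ({(0)}ᶜ : Set E), f x ∂(μ.comap (↑)) := by
      rw [lintegral_subtype_comap (measurableSet_singleton _).compl]
    _ = ∫⁻ z : sphere (0 : E) 1 × Ioi (0 : ℝ), f ((z.2 : ℝ) • (z.1 : E))
          ∂(μ.toSphere.prod (.volumeIoiPow (Module.finrank ℝ E - 1))) := by
      rw [← μ.measurePreserving_homeomorphUnitSphereProd.lintegral_comp_emb hm]
      refine lintegral_congr fun x => ?_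
      have hx : (x : E) ≠ 0 := x.2
      congr 1
      simp [smul_smul, hx]
    _ = _ := by
      rw [lintegral_prod _ h1.aemeasurable]
      refine lintegral_congr fun ξ => ?_
      rw [Measure.volumeIoiPow, lintegral_withDensity_eq_lintegral_mul _ (by fun_prop)
        (by fun_prop)]
      exact lintegral_subtype_comap measurableSet_Ioi
        (fun s : ℝ => ENNReal.ofReal (s ^ (Module.finrank ℝ E - 1)) * f (s • (ξ : E)))

theorem lintegral_norm {E : Type*} [NormedAddCommGroup E] [NormedSpace ℝ E]
    [MeasurableSpace E] [BorelSpace E] [FiniteDimensional ℝ E] [Nontrivial E]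
    (μ : Measure E) [μ.IsAddHaarMeasure] (g : ℝ → ENNReal) (hg : Measurable g) :
    ∫⁻ x, g ‖x‖ ∂μ = μ.toSphere univ * ∫⁻ s in Ioi (0 : ℝ),
      ENNReal.ofReal (s ^ (Module.finrank ℝ E - 1)) * g s := by
  rw [lintegral_polar μ (fun x => g ‖x‖) (by fun_prop), mul_comm, ← lintegral_const]
  refine lintegral_congr fun ξ => ?_
  refine setLIntegral_congr_fun measurableSet_Ioi fun s hs => ?_
  simp [norm_smul, abs_of_pos (show (0:ℝ) < s from hs)]

/-- Fubini in the first coordinate, for functions of the first coordinate and the norm. -/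
theorem lintegral_slice (m : ℕ) (f : ℝ → ℝ → ENNReal)
    (hf : Measurable (Function.uncurry f)) :
    ∫⁻ x : En (m + 1), f (x 0) ‖x‖ =
      ∫⁻ a : ℝ, ∫⁻ y : En m, f a (√(a ^ 2 + ‖y‖ ^ 2)) := by
  have h1 := (PiLp.volume_preserving_toLp (Fin (m + 1))).lintegral_comp_emb
    (MeasurableEquiv.toLp 2 (Fin (m + 1) → ℝ)).measurableEmbedding
    (fun x : En (m + 1) => f (x 0) ‖x‖)
  have h2 := (volume_preserving_piFinSuccAbove (fun _ : Fin (m + 1) => ℝ) 0).symm.lintegral_comp_emb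
    (MeasurableEquiv.measurableEmbedding _)
    (fun x : Fin (m + 1) → ℝ => f (x 0) ‖(WithLp.toLp 2 x : En (m + 1))‖)
  rw [← h1, ← h2, Measure.volume_eq_prod, lintegral_prod]
  swap
  · refine Measurable.aemeasurable ?_
    have := hf.comp (f := fun x : Fin (m + 1) → ℝ => (x 0, ‖(WithLp.toLp 2 x : En (m + 1))‖))
      (by fun_prop)
    exact this.comp (MeasurableEquiv.measurable _)
  refine lintegral_congr fun a => ?_
  have h3 := (PiLp.volume_preserving_toLp (Fin m)).lintegral_comp_emb
    (MeasurableEquiv.toLp 2 (Fin m → ℝ)).measurableEmbedding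
    (fun y : En m => f a (√(a ^ 2 + ‖y‖ ^ 2)))
  rw [← h3]
  refine lintegral_congr fun y => ?_
  have : (MeasurableEquiv.piFinSuccAbove (fun _ : Fin (m + 1) => ℝ) 0).symm (a, y)
    = Fin.cons a y := by
      simp [MeasurableEquiv.piFinSuccAbove, Fin.insertNthEquiv]
  rw [this]
  congr 1
  rw [EuclideanSpace.norm_eq, EuclideanSpace.norm_sq_eq]
  simp [Fin.sum_univ_succ]

/-- First evaluation of the integral over the unit ball of a function of the direction cosine:
spherical polar coordinates. -/
theorem sphere_mul_radial (m : ℕ) (F : ℝ → ENNReal) (hF : Measurable F) :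
    ∫⁻ x : En (m + 1), (Iio 1).indicator 1 ‖x‖ * F (x 0 / ‖x‖) =
      (∫⁻ ξ : sphere (0 : En (m + 1)) 1, F ((ξ : En (m + 1)) 0) ∂(volume.toSphere)) *
      ∫⁻ s in Ioi (0 : ℝ), ENNReal.ofReal (s ^ m) * (Iio 1).indicator 1 s := by
  have hI : Measurable ((Iio (1:ℝ)).indicator (1 : ℝ → ENNReal)) :=
    measurable_one.indicator measurableSet_Iio
  rw [lintegral_polar volume (fun x : En (m + 1) => (Iio 1).indicator 1 ‖x‖ * F (x 0 / ‖x‖))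
    ((hI.comp measurable_norm).mul (hF.comp (by fun_prop))), ← lintegral_mul_const]
  · refine lintegral_congr fun ξ => ?_
    rw [← lintegral_const_mul _ (by fun_prop)]
    refine setLIntegral_congr_fun measurableSet_Ioi fun s hs => ?_
    have hs' : (0 : ℝ) < s := hs
    simp only [norm_smul, norm_eq_of_mem_sphere, Real.norm_eq_abs, abs_of_pos hs', mul_one,
      finrank_euclideanSpace, Fintype.card_fin, Nat.add_sub_cancel, PiLp.smul_apply, smul_eq_mul]
    rw [mul_div_cancel_left₀ _ hs'.ne']
    ring
  · exact hF.comp (by fun_prop)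

/-- Second evaluation of the same integral: slice along the first coordinate, integrate out the
directions in `ℝᵐ`, and use polar coordinates in the half-plane of pairs `(x₀, ρ)`, `ρ > 0`. -/
theorem slice_polar (m : ℕ) (hm : 1 ≤ m) (F : ℝ → ENNReal) (hF : Measurable F) :
    ∫⁻ x : En (m + 1), (Iio 1).indicator 1 ‖x‖ * F (x 0 / ‖x‖) =
      (volume : Measure (En m)).toSphere univ *
      ((∫⁻ s in Ioi (0 : ℝ), ENNReal.ofReal (s ^ m) * (Iio 1).indicator 1 s) *
      ∫⁻ θ in Ioo 0 Real.pi, ENNReal.ofReal (Real.sin θ ^ (m - 1)) * F (Real.cos θ)) := by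
  have hI : Measurable ((Iio (1:ℝ)).indicator (1 : ℝ → ENNReal)) :=
    measurable_one.indicator measurableSet_Iio
  have hP : Measurable ((Ioi (0:ℝ)).indicator (1 : ℝ → ENNReal)) :=
    measurable_one.indicator measurableSet_Ioi
  have : Nontrivial (En m) := by
    have : Nonempty (Fin m) := ⟨⟨0, hm⟩⟩
    infer_instance
  rw [lintegral_slice m (fun a s => (Iio 1).indicator 1 s * F (a / s))
    ((hI.comp measurable_snd).mul (hF.comp (by fun_prop)))]
  have e1 : ∀ a : ℝ, ∫⁻ y : En m, (Iio 1).indicator 1 (√(a ^ 2 + ‖y‖ ^ 2)) *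
      F (a / √(a ^ 2 + ‖y‖ ^ 2)) = (volume : Measure (En m)).toSphere univ *
      ∫⁻ b, (Ioi (0:ℝ)).indicator 1 b * ENNReal.ofReal (b ^ (m - 1)) *
        ((Iio 1).indicator 1 (√(a ^ 2 + b ^ 2)) * F (a / √(a ^ 2 + b ^ 2))) := by
    intro a
    rw [lintegral_norm volume (fun b => (Iio 1).indicator 1 (√(a ^ 2 + b ^ 2)) *
      F (a / √(a ^ 2 + b ^ 2))) ((hI.comp (by fun_prop)).mul (hF.comp (by fun_prop)))]
    congr 1
    rw [← lintegral_indicator measurableSet_Ioi]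
    refine lintegral_congr fun b => ?_
    by_cases hb : b ∈ Ioi (0:ℝ) <;> simp [hb]
  simp only [e1]
  have hmeas : Measurable fun z : ℝ × ℝ => (Ioi (0:ℝ)).indicator (1 : ℝ → ENNReal) z.2 *
      ENNReal.ofReal (z.2 ^ (m - 1)) *
        ((Iio 1).indicator 1 (√(z.1 ^ 2 + z.2 ^ 2)) * F (z.1 / √(z.1 ^ 2 + z.2 ^ 2))) :=
    ((hP.comp measurable_snd).mul (by fun_prop)).mul
      ((hI.comp (by fun_prop)).mul (hF.comp (by fun_prop)))
  rw [lintegral_const_mul _ hmeas.lintegral_prod_right']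
  congr 1
  rw [← lintegral_prod _ hmeas.aemeasurable, ← Measure.volume_eq_prod,
    ← lintegral_comp_polarCoord_symm, polarCoord_target]
  have hB : Measurable fun θ : ℝ => (Ioi (0:ℝ)).indicator (1 : ℝ → ENNReal) (Real.sin θ) *
      (ENNReal.ofReal (Real.sin θ ^ (m - 1)) * F (Real.cos θ)) :=
    (hP.comp (by fun_prop)).mul (Measurable.mul (by fun_prop) (hF.comp (by fun_prop)))
  have hA : Measurable fun s : ℝ => ENNReal.ofReal (s ^ m) * (Iio 1).indicator 1 s :=
    Measurable.mul (by fun_prop) hI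
  calc _ = ∫⁻ z in Ioi (0:ℝ) ×ˢ Ioo (-Real.pi) Real.pi,
        (ENNReal.ofReal (z.1 ^ m) * (Iio 1).indicator 1 z.1) *
        ((Ioi (0:ℝ)).indicator (1 : ℝ → ENNReal) (Real.sin z.2) *
      (ENNReal.ofReal (Real.sin z.2 ^ (m - 1)) * F (Real.cos z.2))) := by
        refine setLIntegral_congr_fun (measurableSet_Ioi.prod measurableSet_Ioo) fun z hz => ?_
        obtain ⟨s, θ⟩ := z
        have hs : 0 < s := hz.1
        have e2 : √((s * Real.cos θ) ^ 2 + (s * Real.sin θ) ^ 2) = s := by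
          rw [show (s * Real.cos θ) ^ 2 + (s * Real.sin θ) ^ 2
            = s ^ 2 * (Real.cos θ ^ 2 + Real.sin θ ^ 2) by ring, Real.cos_sq_add_sin_sq, mul_one,
            Real.sqrt_sq hs.le]
        simp only [polarCoord_symm_apply, e2, smul_eq_mul]
        rw [mul_div_cancel_left₀ _ hs.ne']
        by_cases hθ : 0 < Real.sin θ
        · have hsθ : 0 < s * Real.sin θ := mul_pos hs hθ
          simp only [indicator_of_mem (show s * Real.sin θ ∈ Ioi (0:ℝ) from hsθ),
            indicator_of_mem (show Real.sin θ ∈ Ioi (0:ℝ) from hθ), Pi.one_apply, one_mul]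
          rw [mul_pow, ENNReal.ofReal_mul (by positivity)]
          obtain ⟨k, rfl⟩ : ∃ k, m = k + 1 := ⟨m - 1, by omega⟩
          rw [pow_succ, ENNReal.ofReal_mul (by positivity), Nat.add_sub_cancel]
          ring
        -- The lower half-plane contributes nothing to either side.
        · have hsθ : ¬ 0 < s * Real.sin θ := fun h => hθ (pos_of_mul_pos_right h hs.le)
          rw [indicator_of_notMem (show s * Real.sin θ ∉ Ioi (0:ℝ) from hsθ),
            indicator_of_notMem (show Real.sin θ ∉ Ioi (0:ℝ) from hθ)]
          simp
    _ = _ := by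
      rw [Measure.volume_eq_prod, ← Measure.prod_restrict, lintegral_prod_mul hA.aemeasurable
        hB.aemeasurable]
      congr 1
      rw [← lintegral_indicator measurableSet_Ioo, ← lintegral_indicator measurableSet_Ioo]
      refine lintegral_congr fun θ => ?_
      by_cases h1 : θ ∈ Ioo 0 Real.pi
      · rw [indicator_of_mem h1, indicator_of_mem (show θ ∈ Ioo (-Real.pi) Real.pi from
            ⟨by linarith [h1.1, Real.pi_pos], h1.2⟩),
          indicator_of_mem (show Real.sin θ ∈ Ioi (0:ℝ) from Real.sin_pos_of_mem_Ioo h1)]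
        simp
      · rw [indicator_of_notMem h1]
        by_cases h2 : θ ∈ Ioo (-Real.pi) Real.pi
        · rw [indicator_of_mem h2, indicator_of_notMem, zero_mul]
          intro h3
          have : θ ≤ 0 := by
            by_contra h
            exact h1 ⟨not_le.1 h, h2.2⟩
          exact absurd (Real.sin_nonpos_of_nonpos_of_neg_pi_le this h2.1.le) (not_le.2 h3)
        · rw [indicator_of_notMem h2]

/-- Slicing of the sphere: in terms of the polar angle `θ`, the surface measure has density
`|𝕊ᵐ⁻¹| sin^(m-1) θ`. -/
theorem lintegral_sphere (m : ℕ) (hm : 1 ≤ m) (F : ℝ → ENNReal) (hF : Measurable F) :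
    ∫⁻ ξ : sphere (0 : En (m + 1)) 1, F ((ξ : En (m + 1)) 0) ∂(volume.toSphere) =
      (volume : Measure (En m)).toSphere univ *
      ∫⁻ θ in Ioo 0 Real.pi, ENNReal.ofReal (Real.sin θ ^ (m - 1)) * F (Real.cos θ) := by
  have h := (sphere_mul_radial m F hF).symm.trans (slice_polar m hm F hF)
  -- The radial factor is finite and nonzero, so it cancels.
  have hfin : ∫⁻ s in Ioi (0 : ℝ), ENNReal.ofReal (s ^ m) * (Iio 1).indicator 1 s
      = ENNReal.ofReal (1 / (m + 1)) := by
    calc _ = ∫⁻ s in Ioc (0:ℝ) 1, ENNReal.ofReal (s ^ m) := by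
          rw [← restrict_Ioo_eq_restrict_Ioc, ← lintegral_indicator measurableSet_Ioi,
            ← lintegral_indicator measurableSet_Ioo]
          refine lintegral_congr fun s => ?_
          by_cases h0 : 0 < s <;> by_cases h1 : s < 1 <;> simp [indicator, h0, h1]
      _ = _ := by
          rw [← ofReal_integral_eq_lintegral_ofReal, ← intervalIntegral.integral_of_le zero_le_one,
            integral_pow]
          · simp
          · exact (intervalIntegral.intervalIntegrable_pow m).1
          · filter_upwards [ae_restrict_mem measurableSet_Ioc] with y hy
            exact pow_nonneg hy.1.le _
  rw [hfin, mul_left_comm, mul_comm] at h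
  refine (ENNReal.mul_right_inj ?_ ENNReal.ofReal_ne_top).1 h
  simp only [ne_eq, ENNReal.ofReal_eq_zero, not_le]
  positivity

/-! ### Distribution of the chordal distance to the pole -/

/-- The area of the unit sphere of `ℝᵐ`. -/
theorem toSphere_univ (m : ℕ) (hm : 1 ≤ m) :
    (volume : Measure (En m)).toSphere univ =
      ENNReal.ofReal (2 * √Real.pi ^ m / Real.Gamma ((m : ℝ) / 2)) := by
  have : Nonempty (Fin m) := ⟨⟨0, hm⟩⟩
  have hm' : (0 : ℝ) < m := by exact_mod_cast hm
  rw [Measure.toSphere_apply_univ, EuclideanSpace.volume_ball, finrank_euclideanSpace,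
    Fintype.card_fin, ENNReal.ofReal_one, one_pow, one_mul, ← ENNReal.ofReal_natCast,
    ← ENNReal.ofReal_mul hm'.le, Real.Gamma_add_one (by positivity)]
  congr 1
  have := (Real.Gamma_pos_of_pos (show (0:ℝ) < (m : ℝ) / 2 by positivity)).ne'
  field_simp

theorem toSphere_ratio (m : ℕ) (hm : 1 ≤ m) :
    ((volume : Measure (En (m + 1))).toSphere univ)⁻¹ * (volume : Measure (En m)).toSphere univ =
      ENNReal.ofReal (Real.Gamma (((m : ℝ) + 1) / 2) / (√Real.pi * Real.Gamma ((m : ℝ) / 2))) := by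
  have hm' : (0 : ℝ) < m := by exact_mod_cast hm
  have h1 := Real.Gamma_pos_of_pos (show (0:ℝ) < (m : ℝ) / 2 by positivity)
  have h2 := Real.Gamma_pos_of_pos (show (0:ℝ) < ((m : ℝ) + 1) / 2 by positivity)
  have h3 := Real.sqrt_pos.2 Real.pi_pos
  rw [toSphere_univ m hm, toSphere_univ (m + 1) (by omega), Nat.cast_add, Nat.cast_one,
    ← ENNReal.ofReal_inv_of_pos (by positivity), ← ENNReal.ofReal_mul (by positivity)]
  congr 1
  field_simp
  rw [pow_succ]

theorem norm_sub_pole {m : ℕ} (ξ : sphere (0 : En (m + 1)) 1) :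
    ‖(ξ : En (m + 1)) - EuclideanSpace.single 0 (1 : ℝ)‖ = √(2 - 2 * (ξ : En (m + 1)) 0) := by
  rw [← Real.sqrt_sq (norm_nonneg ((ξ : En (m + 1)) - EuclideanSpace.single 0 (1 : ℝ))),
    norm_sub_sq_real, norm_eq_of_mem_sphere, EuclideanSpace.inner_single_right]
  congr 1
  simp
  ring

/-- The substitution `t = 2 sin (θ/2) = √(2 - 2 cos θ)`; the Jacobian `cos (θ/2)` dominates
`cos^(m-1) (θ/2)` because `m ≥ 2`. -/
theorem theta_le (m : ℕ) (hm : 2 ≤ m) (H : ℝ → ENNReal) :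
    ∫⁻ θ in Ioo 0 Real.pi, ENNReal.ofReal (Real.sin θ ^ (m - 1)) * H (√(2 - 2 * Real.cos θ)) ≤
      ∫⁻ t in Ioi (0:ℝ), ENNReal.ofReal (t ^ (m - 1)) * H t := by
  have hd : ∀ θ ∈ Ioo 0 Real.pi, HasDerivWithinAt (fun θ => 2 * Real.sin (θ / 2))
      (Real.cos (θ / 2)) (Ioo 0 Real.pi) θ := by
    intro θ _
    have := (((Real.hasDerivAt_sin (θ / 2)).comp θ ((hasDerivAt_id θ).div_const 2)).const_mul 2)
    refine (this.congr_deriv ?_).hasDerivWithinAt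
    ring
  have hinj : InjOn (fun θ => 2 * Real.sin (θ / 2)) (Ioo 0 Real.pi) := by
    intro x hx y hy hxy
    have := Real.injOn_sin (x₁ := x / 2) (x₂ := y / 2)
      ⟨by linarith [hx.1, Real.pi_pos], by linarith [hx.2]⟩
      ⟨by linarith [hy.1, Real.pi_pos], by linarith [hy.2]⟩ (by simpa using hxy)
    linarith
  have hsub : (fun θ => 2 * Real.sin (θ / 2)) '' Ioo 0 Real.pi ⊆ Ioi 0 := by
    rintro _ ⟨θ, hθ, rfl⟩
    have : 0 < Real.sin (θ / 2) :=
      Real.sin_pos_of_pos_of_lt_pi (by linarith [hθ.1]) (by linarith [hθ.1, hθ.2])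
    simpa using this
  refine le_trans ?_ (lintegral_mono_set hsub)
  rw [lintegral_image_eq_lintegral_abs_deriv_mul measurableSet_Ioo hd hinj]
  refine setLIntegral_mono_ae' measurableSet_Ioo (Filter.Eventually.of_forall fun θ hθ => ?_)
  have hs : 0 < Real.sin (θ / 2) :=
    Real.sin_pos_of_pos_of_lt_pi (by linarith [hθ.1]) (by linarith [hθ.1, hθ.2])
  have hc : 0 < Real.cos (θ / 2) :=
    Real.cos_pos_of_mem_Ioo ⟨by linarith [hθ.1, Real.pi_pos], by linarith [hθ.2]⟩
  have e0 : θ = 2 * (θ / 2) := by ring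
  have e1 : √(2 - 2 * Real.cos θ) = 2 * Real.sin (θ / 2) := by
    rw [show 2 - 2 * Real.cos θ = (2 * Real.sin (θ / 2)) ^ 2 by
      rw [mul_pow, Real.sin_sq_eq_half_sub, ← e0]; ring]
    exact Real.sqrt_sq (by positivity)
  rw [e1, ← mul_assoc, ← ENNReal.ofReal_mul (abs_nonneg _), abs_of_pos hc]
  gcongr
  rw [show Real.sin θ = 2 * Real.sin (θ / 2) * Real.cos (θ / 2) by
    rw [← Real.sin_two_mul, ← e0], mul_pow, mul_comm]
  gcongr
  exact pow_le_of_le_one hc.le (Real.cos_le_one _) (by omega)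

/-- The distribution of the chordal distance to the pole under normalized surface measure is at
most `α₁ t^(n-2) dt`, where `n = m + 1`. -/
theorem sigma_le (m : ℕ) (hm : 2 ≤ m) (H : ℝ → ENNReal) (hH : Measurable H) :
    ∫⁻ ξ : sphere (0 : En (m + 1)) 1, H ‖(ξ : En (m + 1)) - EuclideanSpace.single 0 (1 : ℝ)‖
        ∂(sigmaMeasure (m + 1)) ≤
      ENNReal.ofReal (Real.Gamma (((m : ℝ) + 1) / 2) / (√Real.pi * Real.Gamma ((m : ℝ) / 2))) *
        ∫⁻ t in Ioi (0:ℝ), ENNReal.ofReal (t ^ (m - 1)) * H t := by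
  simp only [norm_sub_pole]
  rw [sigmaMeasure, lintegral_smul_measure, smul_eq_mul,
    lintegral_sphere m (by omega) (fun u => H (√(2 - 2 * u))) (hH.comp (by fun_prop)),
    ← mul_assoc, toSphere_ratio m (by omega)]
  exact mul_le_mul_right (theta_le m hm H) _

/-! ### The majorizing function -/

/-- The integral of the two-piece majorizing function against `t^(n-2) dt`, where `n = m + 1`. -/
theorem radial_integral (m : ℕ) (hm : 2 ≤ m) (q p d A B : ℝ) (hq : 0 ≤ q)
    (hpq : 0 < p - q - (m + 1)) (hd : 0 < d) (hA : 0 ≤ A) (hB : 0 ≤ B) :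
    ∫⁻ t in Ioi (0:ℝ), ENNReal.ofReal (t ^ (m - 1)) *
        ENNReal.ofReal (if t ≤ d then A * t ^ q else B * t ^ (q + 1 - p)) =
      ENNReal.ofReal (A * (d ^ (q + m) / (q + m)) +
        B * (d ^ (q + 1 + m - p) / (p - q - (m + 1)))) := by
  have hm' : ((m - 1 : ℕ) : ℝ) = m - 1 := by
    rw [Nat.cast_sub (by omega), Nat.cast_one]
  have hm0 : (2 : ℝ) ≤ m := by exact_mod_cast hm
  rw [← Ioc_union_Ioi_eq_Ioi hd.le, lintegral_union measurableSet_Ioi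
    (Ioc_disjoint_Ioi le_rfl), ENNReal.ofReal_add]
  rotate_left
  · exact mul_nonneg hA (by positivity)
  · exact mul_nonneg hB (by positivity)
  congr 1
  · calc _ = ∫⁻ t in Ioc 0 d, ENNReal.ofReal (A * t ^ (q + m - 1)) := by
          refine setLIntegral_congr_fun measurableSet_Ioc fun t ht => ?_
          have h0 : 0 < t := ht.1
          simp only [if_pos ht.2]
          rw [← ENNReal.ofReal_mul (by positivity)]
          congr 1
          rw [← Real.rpow_natCast, hm', mul_left_comm, ← Real.rpow_add h0]
          congr 2
          ring
      _ = _ := by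
          rw [← ofReal_integral_eq_lintegral_ofReal]
          · rw [integral_const_mul, ← intervalIntegral.integral_of_le hd.le,
              integral_rpow (Or.inl (by linarith)), Real.zero_rpow (by linarith)]
            simp
          · exact ((intervalIntegral.intervalIntegrable_rpow' (by linarith)).1).const_mul A
          · filter_upwards [ae_restrict_mem measurableSet_Ioc] with t ht
            have h0 : 0 < t := ht.1
            simp only [Pi.zero_apply]
            positivity
  · calc _ = ∫⁻ t in Ioi d, ENNReal.ofReal (B * t ^ (q + m - p)) := by
          refine setLIntegral_congr_fun measurableSet_Ioi fun t ht => ?_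
          have h0 : 0 < t := hd.trans ht
          simp only [if_neg (not_le.2 (show d < t from ht))]
          rw [← ENNReal.ofReal_mul (by positivity)]
          congr 1
          rw [← Real.rpow_natCast, hm', mul_left_comm, ← Real.rpow_add h0]
          congr 2
          ring
      _ = _ := by
          rw [← ofReal_integral_eq_lintegral_ofReal]
          · rw [integral_const_mul, integral_Ioi_rpow_of_lt (by linarith) hd]
            congr 2
            rw [show q + m - p + 1 = q + 1 + m - p by ring, neg_div, ← div_neg]
            congr 1
            ring
          · exact (integrableOn_Ioi_rpow_of_lt (by linarith) hd).const_mul B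
          · filter_upwards [ae_restrict_mem measurableSet_Ioi] with t ht
            have h0 : 0 < t := hd.trans ht
            simp only [Pi.zero_apply]
            positivity

/-- Bound of the integrand by a function of `t = ‖ξ - e₁‖` alone; here `d = 1 - r` and
`R = ‖ξ - r e₁‖`. -/
theorem pointwise_bound (ω : ℝ → ℝ) (hω : IsMajorant ω) (q p d t R : ℝ) (hp : 0 ≤ p) (hd : 0 < d)
    (ht : 0 ≤ t) (hR : d ≤ R) (hR' : t / 2 ≤ R) :
    t ^ q * ω t / R ^ p ≤ if t ≤ d then ω d / d ^ p * t ^ q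
      else ω d / d * 2 ^ p * t ^ (q + 1 - p) := by
  obtain ⟨-, hmono, -, hnn, hdec⟩ := hω
  have h1 := hnn t ht
  have h2 := hnn d hd.le
  have hR0 := hd.trans_le hR
  split_ifs with h
  · calc t ^ q * ω t / R ^ p ≤ t ^ q * ω d / d ^ p := by
          gcongr
          exact hmono ht hd.le h
      _ = _ := by ring
  · have ht0 : 0 < t := hd.trans (not_le.1 h)
    have h3 : ω t ≤ ω d / d * t := (div_le_iff₀ ht0).1 (hdec d t hd (not_le.1 h).le)
    calc t ^ q * ω t / R ^ p ≤ t ^ q * (ω d / d * t) / (t / 2) ^ p := by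
          gcongr
      _ = _ := by
          rw [Real.div_rpow ht0.le (by norm_num), Real.rpow_sub ht0, Real.rpow_add ht0,
            Real.rpow_one]
          field_simp

theorem dist_bounds {E : Type*} [NormedAddCommGroup E] [NormedSpace ℝ E] (ξ e : E) (hξ : ‖ξ‖ = 1)
    (he : ‖e‖ = 1) (r : ℝ) (hr0 : 0 ≤ r) (hr1 : r < 1) :
    1 - r ≤ ‖ξ - r • e‖ ∧ ‖ξ - e‖ / 2 ≤ ‖ξ - r • e‖ := by
  have h0 : 1 - r ≤ ‖ξ - r • e‖ := by
    have := norm_sub_norm_le ξ (r • e)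
    rwa [norm_smul, hξ, he, mul_one, Real.norm_of_nonneg hr0] at this
  refine ⟨h0, ?_⟩
  have h1 : ‖ξ - e‖ ≤ ‖ξ - r • e‖ + ‖r • e - e‖ := norm_sub_le_norm_sub_add_norm_sub _ _ _
  have h2 : ‖r • e - e‖ = 1 - r := by
    rw [show r • e - e = (r - 1) • e by rw [sub_smul, one_smul], norm_smul, he, mul_one,
      Real.norm_of_nonpos (by linarith)]
    ring
  linarith

/-- the key sphere integral estimate with majorant `ω`. -/
theorem stmt_11 (n : ℕ) (hn : 3 ≤ n) (ω : ℝ → ℝ) (hω : IsMajorant ω)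
    (q p : ℝ) (hq : 0 ≤ q) (hpq : 0 < p - q - n)
    (r : ℝ) (hr0 : 0 ≤ r) (hr1 : r < 1) :
    (∫ ξ, ‖(ξ : En n) - EuclideanSpace.single (⟨0, by omega⟩ : Fin n) (1 : ℝ)‖ ^ q
          * ω ‖(ξ : En n) - EuclideanSpace.single (⟨0, by omega⟩ : Fin n) (1 : ℝ)‖
          / ‖(ξ : En n) - r • EuclideanSpace.single (⟨0, by omega⟩ : Fin n) (1 : ℝ)‖ ^ p
        ∂(sigmaMeasure n))
      ≤ Real.Gamma ((n : ℝ) / 2) / (Real.sqrt Real.pi * Real.Gamma (((n : ℝ) - 1) / 2))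
          * (ω (1 - r) / (1 - r) ^ (p + 1 - q - n))
          * (1 / (q + n - 1) + 2 ^ p / (p - q - n)) := by
  obtain ⟨m, rfl⟩ : ∃ m, n = m + 1 := ⟨n - 1, by omega⟩
  have hm : 2 ≤ m := by omega
  have hm0 : (2 : ℝ) ≤ m := by exact_mod_cast hm
  push_cast at hpq ⊢
  have hz : (⟨0, by omega⟩ : Fin (m + 1)) = 0 := rfl
  simp only [hz, add_sub_cancel_right]
  have hd : 0 < 1 - r := by linarith
  have hωd : 0 ≤ ω (1 - r) := hω.2.2.2.1 _ hd.le
  have hp : 0 ≤ p := by linarith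
  have hΓ1 := Real.Gamma_pos_of_pos (show (0:ℝ) < (m : ℝ) / 2 by positivity)
  have hΓ2 := Real.Gamma_pos_of_pos (show (0:ℝ) < ((m : ℝ) + 1) / 2 by positivity)
  set h : ℝ → ℝ := fun t => if t ≤ 1 - r then ω (1 - r) / (1 - r) ^ p * t ^ q
      else ω (1 - r) / (1 - r) * 2 ^ p * t ^ (q + 1 - p) with hh
  have hmeas : Measurable fun t => ENNReal.ofReal (h t) :=
    (Measurable.ite measurableSet_Iic (by fun_prop) (by fun_prop)).ennreal_ofReal
  -- `norm_integral_le_lintegral_norm` holds for arbitrary integrands, measurable or not.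
  refine (Real.le_norm_self _).trans ((norm_integral_le_lintegral_norm _).trans
    (ENNReal.toReal_le_of_le_ofReal ?_ ?_))
  · have h1 : 0 < p - q - (m + 1) := by linarith
    have h2 : 0 < q + (m + 1) - 1 := by linarith
    positivity
  calc _ ≤ ∫⁻ ξ : sphere (0 : En (m + 1)) 1,
        ENNReal.ofReal (h ‖(ξ : En (m + 1)) - EuclideanSpace.single 0 (1 : ℝ)‖)
        ∂(sigmaMeasure (m + 1)) := by
        refine lintegral_mono fun ξ => ENNReal.ofReal_le_ofReal ?_
        have hb := dist_bounds (ξ : En (m + 1)) (EuclideanSpace.single 0 (1 : ℝ))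
          (norm_eq_of_mem_sphere ξ) (by simp) r hr0 hr1
        have hω0 := hω.2.2.2.1 _ (norm_nonneg
          ((ξ : En (m + 1)) - EuclideanSpace.single 0 (1 : ℝ)))
        rw [Real.norm_of_nonneg (by positivity)]
        exact pointwise_bound ω hω q p (1 - r) _ _ hp hd (norm_nonneg _) hb.1 hb.2
    _ ≤ _ := sigma_le m hm _ hmeas
    _ = _ := by
        rw [hh, radial_integral m hm q p (1 - r) _ _ hq hpq hd (by positivity) (by positivity),
          ← ENNReal.ofReal_mul (by positivity), mul_assoc (Real.Gamma _ / _)]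
        congr 2
        have e1 : (1 - r) ^ (q + m) = (1 - r) ^ (q + m - p) * (1 - r) ^ p := by
          rw [← Real.rpow_add hd, sub_add_cancel]
        have e2 : (1 - r) ^ (q + 1 + m - p) = (1 - r) ^ (q + m - p) * (1 - r) := by
          rw [← Real.rpow_add_one hd.ne']
          congr 1
          ring
        have e3 : (1 - r) ^ (p + 1 - q - ((m : ℝ) + 1)) = ((1 - r) ^ (q + m - p))⁻¹ := by
          rw [← Real.rpow_neg hd.le]
          congr 1
          ring
        rw [e1, e2, e3, show q + ((m : ℝ) + 1) - 1 = q + m by ring]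
        have h1 : q + (m : ℝ) ≠ 0 := by linarith
        have h2 : p - q - ((m : ℝ) + 1) ≠ 0 := hpq.ne'
        have h3 : (1 - r) ^ p ≠ 0 := by positivity
        have h4 := hd.ne'
        field_simp
end

section
/- Let n ≥ 3 and let ψ ∈ C(𝔹ⁿ,ℝⁿ) satisfy |ψ(x)| ≤ M(1−|x|²) for all x ∈ 𝔹ⁿ, where M ≥ 0 is a constant. Then the function Ψ = G_h[ψ] is continuous in 𝔹ⁿ, and for each k ∈ {1,…,n} the function x ↦ ∫_{𝔹ⁿ} (∂G_h/∂x_k)(x,y) ψ(y) dτ(y) is continuous in 𝔹ⁿ. -/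
/-!
Both functions have the form `x ↦ ∫ K(x,y) ψ(y) dτ(y)` with a kernel `K` that is continuous off the
diagonal of `𝔹ⁿ × 𝔹ⁿ` and satisfies, for `|x| ≤ ρ < 1`,
`|K(x,y)| ≤ C_ρ (1-|y|²)^{n-1} |y-x|^{-(n-1)}`.
Since `|ψ(y)| ≤ M (1-|y|²)`, the boundary factors cancel the density `(1-|y|²)^{-n}` of `τ`, and
the integrand is at most `C_ρ M |y-x|^{-(n-1)}`. After substituting `y = x + z` this majorant,
`C_ρ M |z|^{-(n-1)}` on `|z| < 2`, no longer depends on `x` and is integrable, while for almost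
every `z` (all but `z = 0` and the sphere `|x₀ + z| = 1`) the integrand is continuous in `x` at
`x₀`. Dominated convergence gives continuity (`continuousOn_potential`).

The kernel estimates rest on `|φ_x(y)| = |y-x| / [x,y]` (`norm_mobius`), on
`1 - |φ_x(y)|² = (1-|x|²)(1-|y|²) / [x,y]²` (`one_sub_ratio_sq`), and on `[x,y] ≥ 1 - ρ`
(`le_qbracket`). For `G_h` itself they follow from `g(r) ≤ (1-r²)^{n-1} r^{-(n-1)}`
(`gfun_bound`, `Gh_bound`). For `∂G_h/∂x_k`, the chain rule gives an explicit formula `dker` off the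
diagonal (`hasDerivAt_Gh`), in which the derivative of `|φ_x(y)|` contributes a factor
`(1-|y|²) / [x,y]³` up to a constant (`dker_bound`).
-/

open MeasureTheory Metric Set

/-! ### The Möbius transformation and the bracket -/

/-- No restriction on `a` and `x` is needed: if the radicand of `[a,x]` is not positive, both sides
are `0` by the conventions for division and square root. -/
lemma norm_mobius {n : ℕ} (a x : En n) : ‖mobius a x‖ = ‖x - a‖ / qbracket a x := by
  have key : ‖‖x - a‖ ^ 2 • a - (1 - ‖a‖ ^ 2) • (x - a)‖ ^ 2
      = ‖x - a‖ ^ 2 * (‖x - a‖ ^ 2 + (1 - ‖x‖ ^ 2) * (1 - ‖a‖ ^ 2)) := by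
    have hx : ‖x‖ ^ 2 = ‖a‖ ^ 2 + 2 * inner ℝ a (x - a) + ‖x - a‖ ^ 2 := by
      rw [← norm_add_sq_real, add_sub_cancel]
    rw [norm_sub_sq_real, norm_smul, norm_smul, mul_pow, mul_pow, inner_smul_left,
      inner_smul_right, hx, Real.norm_eq_abs, Real.norm_eq_abs, sq_abs, sq_abs]
    simp only [conj_trivial]
    ring
  unfold mobius
  rcases le_or_gt (‖x - a‖ ^ 2 + (1 - ‖x‖ ^ 2) * (1 - ‖a‖ ^ 2)) 0 with h | h
  · have : qbracket a x = 0 := Real.sqrt_eq_zero_of_nonpos h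
    simp [this]
  · have hq : 0 < qbracket a x := Real.sqrt_pos.2 h
    have hq2 : qbracket a x ^ 2 = ‖x - a‖ ^ 2 + (1 - ‖x‖ ^ 2) * (1 - ‖a‖ ^ 2) :=
      Real.sq_sqrt h.le
    rw [← hq2] at key
    have : ‖‖x - a‖ ^ 2 • a - (1 - ‖a‖ ^ 2) • (x - a)‖ = ‖x - a‖ * qbracket a x := by
      rw [← mul_pow] at key
      exact (sq_eq_sq₀ (norm_nonneg _) (by positivity)).1 key
    rw [norm_smul, this, norm_inv, norm_pow, Real.norm_of_nonneg hq.le]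
    field_simp

lemma qbracket_sq {n : ℕ} {a x : En n} (ha : ‖a‖ < 1) (hx : ‖x‖ < 1) :
    qbracket a x ^ 2 = ‖x - a‖ ^ 2 + (1 - ‖x‖ ^ 2) * (1 - ‖a‖ ^ 2) := by
  refine Real.sq_sqrt ?_
  have h1 : 0 ≤ 1 - ‖x‖ ^ 2 := by nlinarith [norm_nonneg x]
  have h2 : 0 ≤ 1 - ‖a‖ ^ 2 := by nlinarith [norm_nonneg a]
  positivity

/-- This follows from `[a,x]² = 1 - 2⟨x,a⟩ + |x|²|a|² ≥ (1 - |x||a|)²`. -/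
lemma le_qbracket {n : ℕ} {a x : En n} {ρ : ℝ} (hρ : ρ < 1) (ha : ‖a‖ ≤ ρ) (hx : ‖x‖ < 1) :
    1 - ρ ≤ qbracket a x := by
  refine Real.le_sqrt_of_sq_le ?_
  rw [norm_sub_sq_real]
  have h1 := real_inner_le_norm x a
  have h2 : ‖x‖ * ‖a‖ ≤ ρ := by nlinarith [norm_nonneg x, norm_nonneg a]
  have h3 : (1 - ρ) ^ 2 ≤ (1 - ‖x‖ * ‖a‖) ^ 2 := by
    apply pow_le_pow_left₀ <;> linarith
  nlinarith

/-! ### The radial function `g` -/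

lemma gfun_hasDerivAt (n : ℕ) {r : ℝ} (hr : 0 < r) :
    HasDerivAt (gfun n) (-((1 / (n : ℝ)) * ((1 - r ^ 2) ^ (n - 2) / r ^ (n - 1)))) r := by
  have hc : ∀ s : ℝ, 0 < s →
      ContinuousAt (fun s : ℝ => (1 - s ^ 2) ^ (n - 2) / s ^ (n - 1)) s := fun s hs =>
    ContinuousAt.div (by fun_prop) (by fun_prop) (pow_ne_zero _ hs.ne')
  have hon : ContinuousOn (fun s : ℝ => (1 - s ^ 2) ^ (n - 2) / s ^ (n - 1)) (Ioi 0) :=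
    fun s hs => (hc s hs).continuousWithinAt
  have h := intervalIntegral.integral_hasDerivAt_left
    (f := fun s : ℝ => (1 - s ^ 2) ^ (n - 2) / s ^ (n - 1)) (a := r) (b := 1)
    ((hon.mono fun s hs => lt_of_lt_of_le (lt_min hr one_pos) hs.1).intervalIntegrable)
    (hon.stronglyMeasurableAtFilter isOpen_Ioi r hr) (hc r hr)
  rw [← mul_neg]
  exact h.const_mul (1 / (n : ℝ))

/-- The integrand defining `gfun` is decreasing, so the integral is at most the interval length
times the value at the left endpoint; then `1 - r ≤ 1 - r²` and `1 / n ≤ 1`. -/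
lemma gfun_bound {n : ℕ} (hn : 3 ≤ n) {r : ℝ} (hr : 0 < r) (hr1 : r ≤ 1) :
    |gfun n r| ≤ (1 - r ^ 2) ^ (n - 1) / r ^ (n - 1) := by
  have h := intervalIntegral.norm_integral_le_of_norm_le_const (a := r) (b := 1)
    (f := fun s : ℝ => (1 - s ^ 2) ^ (n - 2) / s ^ (n - 1))
    (C := (1 - r ^ 2) ^ (n - 2) / r ^ (n - 1)) (by
      intro s hs
      rw [uIoc_of_le hr1] at hs
      have hs0 : 0 < s := hr.trans hs.1
      have h1 : 0 ≤ 1 - s ^ 2 := by nlinarith [hs.2]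
      rw [Real.norm_of_nonneg (by positivity)]
      have h2 : 1 - s ^ 2 ≤ 1 - r ^ 2 := by nlinarith [hs.1]
      have h3 : 0 ≤ 1 - r ^ 2 := h1.trans h2
      have := hs.1.le
      gcongr)
  rw [abs_of_nonneg (sub_nonneg.2 hr1), Real.norm_eq_abs] at h
  have h0 : 0 ≤ 1 - r ^ 2 := by nlinarith
  have hn1 : (1 / (n : ℝ)) ≤ 1 := by
    rw [div_le_one (by positivity)]
    exact_mod_cast (by omega : 1 ≤ n)
  have hp : (1 - r ^ 2) ^ (n - 1) = (1 - r ^ 2) ^ (n - 2) * (1 - r ^ 2) := by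
    rw [← pow_succ]; congr 1; omega
  calc |gfun n r| ≤ 1 * ((1 - r ^ 2) ^ (n - 2) / r ^ (n - 1) * (1 - r)) := by
        rw [gfun, abs_mul, abs_of_nonneg (by positivity : (0 : ℝ) ≤ 1 / n)]
        gcongr
    _ ≤ (1 - r ^ 2) ^ (n - 2) / r ^ (n - 1) * (1 - r ^ 2) := by
        rw [one_mul]
        gcongr
        nlinarith
    _ = _ := by rw [hp]; ring

/-! ### Weakly singular potentials -/

/-- The singular kernel `|z|^{-(n-1)}` is locally integrable in dimension `n`. -/
lemma integrable_kernel {n : ℕ} (hn : 3 ≤ n) (C : ℝ) :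
    Integrable (fun z : En n => (Iio (2 : ℝ)).indicator (fun r => C / r ^ (n - 1)) ‖z‖) := by
  have : Nonempty (Fin n) := ⟨⟨0, by omega⟩⟩
  rw [integrable_fun_norm_addHaar (volume : Measure (En n))
    (f := (Iio (2 : ℝ)).indicator (fun r => C / r ^ (n - 1)))]
  have : IntegrableOn ((Iio (2 : ℝ)).indicator fun _ => C) (Ioi 0) := by
    rw [integrableOn_indicator_iff measurableSet_Iio]
    have : Iio (2 : ℝ) ∩ Ioi 0 = Ioo 0 2 := by ext; simp [and_comm]
    rw [this]
    simp
  refine this.congr_fun (fun r hr => ?_) measurableSet_Ioi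
  have hr : (0 : ℝ) < r := hr
  by_cases h : r ∈ Iio (2 : ℝ)
  · simp only [indicator_of_mem h, finrank_euclideanSpace, Fintype.card_fin, smul_eq_mul]
    field_simp
  · simp [indicator_of_notMem h]

/-- Continuity of the integral of a weakly singular kernel against `ψ dτ`. The hyperbolic density
`(1-|y|²)^{-n}` is compensated by the factors `(1-|y|²)^{n-1}` from the kernel and `1-|y|²` from
`ψ`, so after the translation `y = x + z` the integrand is dominated, locally uniformly in `x`,
by a multiple of `|z|^{-(n-1)}` on `|z| < 2`. -/
lemma continuousOn_potential {n : ℕ} (hn : 3 ≤ n) {M : ℝ} (hM : 0 ≤ M) {ψ : En n → En n}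
    (hψc : ContinuousOn ψ (ball (0 : En n) 1))
    (hψb : ∀ x ∈ ball (0 : En n) 1, ‖ψ x‖ ≤ M * (1 - ‖x‖ ^ 2))
    {K : En n → En n → ℝ}
    (hKc : ContinuousOn (fun p : En n × En n => K p.1 p.2)
      {p | p.1 ∈ ball (0 : En n) 1 ∧ p.2 ∈ ball (0 : En n) 1 ∧ p.1 ≠ p.2})
    (hKb : ∀ ρ < (1 : ℝ), ∃ C, 0 ≤ C ∧ ∀ x y : En n, ‖x‖ ≤ ρ → ‖y‖ < 1 → x ≠ y →
      |K x y| ≤ C * (1 - ‖y‖ ^ 2) ^ (n - 1) / ‖y - x‖ ^ (n - 1)) :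
    ContinuousOn (fun x => ∫ y in ball (0 : En n) 1, K x y • ψ y ∂(tauMeasure n))
      (ball (0 : En n) 1) := by
  have : Nonempty (Fin n) := ⟨⟨0, by omega⟩⟩
  set w : En n → ℝ := fun y => ((1 - ‖y‖ ^ 2) ^ n)⁻¹ with hw
  set F : En n → En n → En n := fun x z =>
    (ball (0 : En n) 1).indicator (fun y => w y • (K x y • ψ y)) (x + z) with hF
  have hpos : ∀ y ∈ ball (0 : En n) 1, 0 < 1 - ‖y‖ ^ 2 := by
    intro y hy
    rw [mem_ball_zero_iff] at hy
    nlinarith [norm_nonneg y]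
  -- Passage from the invariant measure to a Lebesgue integral over the whole space.
  have hconv : ∀ x, ∫ y in ball (0 : En n) 1, K x y • ψ y ∂(tauMeasure n)
      = ((volume (ball (0 : En n) 1))⁻¹).toReal • ∫ z, F x z := by
    intro x
    rw [tauMeasure, setIntegral_withDensity_eq_setIntegral_toReal_smul (by fun_prop)
      (by simp) _ measurableSet_ball, nuMeasure, Measure.restrict_smul, integral_smul_measure]
    congr 1
    rw [hF]
    simp only
    rw [integral_add_left_eq_self
      (fun y => (ball (0 : En n) 1).indicator (fun y => w y • (K x y • ψ y)) y) x,
      integral_indicator measurableSet_ball]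
    refine setIntegral_congr_fun measurableSet_ball fun y hy => ?_
    have := hpos y hy
    simp only [hw]
    rw [ENNReal.toReal_ofReal (by positivity)]
  have hwc : ContinuousOn w (ball (0 : En n) 1) :=
    ContinuousOn.inv₀ (by fun_prop) fun y hy => (pow_pos (hpos y hy) _).ne'
  simp only [hconv]
  suffices h : ContinuousOn (fun x => ∫ z, F x z) (ball (0 : En n) 1) from
    h.const_smul ((volume (ball (0 : En n) 1))⁻¹).toReal
  refine fun x₀ hx₀ => ContinuousAt.continuousWithinAt ?_
  have hx₀' : ‖x₀‖ < 1 := mem_ball_zero_iff.1 hx₀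
  obtain ⟨ρ, hρ₀, hρ⟩ := exists_between hx₀'
  obtain ⟨C, hC, hCb⟩ := hKb ρ hρ
  have hev : ∀ᶠ x in nhds x₀, ‖x‖ < ρ := continuous_norm.continuousAt.eventually_lt_const hρ₀
  refine continuousAt_of_dominated
    (bound := fun z => (Iio (2 : ℝ)).indicator (fun r => C * M / r ^ (n - 1)) ‖z‖)
    ?_ ?_ (integrable_kernel hn _) ?_
  · filter_upwards [hev] with x hx
    have hxb : x ∈ ball (0 : En n) 1 := mem_ball_zero_iff.2 (hx.trans hρ)
    have h1 : AEStronglyMeasurable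
        ((ball (0 : En n) 1).indicator (fun y => w y • (K x y • ψ y))) volume := by
      rw [aestronglyMeasurable_indicator_iff measurableSet_ball,
        ← Measure.restrict_congr_set (sdiff_null_ae_eq_self (measure_singleton x))]
      refine ContinuousOn.aestronglyMeasurable ?_
        (measurableSet_ball.diff (measurableSet_singleton x))
      refine (hwc.mono sdiff_subset).fun_smul (ContinuousOn.fun_smul ?_ (hψc.mono sdiff_subset))
      exact hKc.comp (f := fun y : En n => (x, y)) (by fun_prop)
        fun y hy => ⟨hxb, hy.1, fun h => hy.2 h.symm⟩
    exact h1.comp_measurePreserving (measurePreserving_add_left volume x)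
  · filter_upwards [hev] with x hx
    have hz0 : ∀ᵐ z : En n, z ≠ 0 := by
      rw [ae_iff]; simp
    filter_upwards [hz0] with z hz
    simp only [hF]
    by_cases hy : x + z ∈ ball (0 : En n) 1
    · have hp := hpos _ hy
      have hy' := mem_ball_zero_iff.1 hy
      have hz2 : ‖z‖ ∈ Iio (2 : ℝ) := by
        have := norm_sub_le (x + z) x
        rw [add_sub_cancel_left] at this
        simp only [mem_Iio]
        linarith
      rw [indicator_of_mem hy, indicator_of_mem hz2, norm_smul, norm_smul, Real.norm_eq_abs,
        Real.norm_eq_abs]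
      have hb := hCb x (x + z) hx.le hy' (by simpa using hz)
      rw [add_sub_cancel_left] at hb
      have hzp : 0 < ‖z‖ := norm_pos_iff.2 hz
      have hwp : |w (x + z)| = ((1 - ‖x + z‖ ^ 2) ^ n)⁻¹ := abs_of_nonneg (by positivity)
      rw [hwp]
      calc _ ≤ ((1 - ‖x + z‖ ^ 2) ^ n)⁻¹ * (C * (1 - ‖x + z‖ ^ 2) ^ (n - 1) / ‖z‖ ^ (n - 1)
              * (M * (1 - ‖x + z‖ ^ 2))) := by
            gcongr
            exact hψb _ hy
        _ = C * M / ‖z‖ ^ (n - 1) := by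
            have : (1 - ‖x + z‖ ^ 2) ^ n = (1 - ‖x + z‖ ^ 2) ^ (n - 1) * (1 - ‖x + z‖ ^ 2) := by
              rw [← pow_succ]; congr 1; omega
            rw [this]
            field_simp
    · rw [indicator_of_notMem hy, norm_zero]
      simp only [indicator]
      split_ifs <;> positivity
  · have hsph : ∀ᵐ z : En n, z ∉ sphere (-x₀) 1 := by
      rw [ae_iff]; simpa only [not_not] using! Measure.addHaar_sphere volume (-x₀) 1
    have hz0 : ∀ᵐ z : En n, z ≠ 0 := by
      rw [ae_iff]; simp
    filter_upwards [hsph, hz0] with z hz hz0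
    -- Off the sphere, membership of `x + z` in the ball is locally constant in `x`.
    have hne : ‖x₀ + z‖ ≠ 1 := by
      rw [mem_sphere_iff_norm, sub_neg_eq_add, add_comm] at hz
      exact hz
    have hcn : ContinuousAt (fun x : En n => ‖x + z‖) x₀ := by fun_prop
    rcases lt_or_gt_of_ne hne with h | h
    · have hy : x₀ + z ∈ ball (0 : En n) 1 := mem_ball_zero_iff.2 h
      have hop : IsOpen {p : En n × En n |
          p.1 ∈ ball (0 : En n) 1 ∧ p.2 ∈ ball (0 : En n) 1 ∧ p.1 ≠ p.2} :=
        (isOpen_ball.preimage continuous_fst).inter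
          ((isOpen_ball.preimage continuous_snd).inter (isOpen_ne_fun continuous_fst continuous_snd))
      have hc : ContinuousAt (fun x => w (x + z) • (K x (x + z) • ψ (x + z))) x₀ := by
        refine ContinuousAt.fun_smul ?_ (ContinuousAt.fun_smul ?_ ?_)
        · exact (hwc.continuousAt (isOpen_ball.mem_nhds hy)).comp
            (f := fun x => x + z) (by fun_prop)
        · exact ContinuousAt.comp (x := x₀) (f := fun x => (x, x + z))
            (g := fun p : En n × En n => K p.1 p.2)
            (hKc.continuousAt (hop.mem_nhds ⟨hx₀, hy, by simpa using hz0⟩)) (by fun_prop)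
        · exact (hψc.continuousAt (isOpen_ball.mem_nhds hy)).comp
            (f := fun x => x + z) (by fun_prop)
      refine hc.congr ?_
      filter_upwards [hcn.eventually_lt_const h] with x hx
      simp only [hF]
      rw [indicator_of_mem (mem_ball_zero_iff.2 hx)]
    · refine (continuousAt_const (y := (0 : En n))).congr ?_
      filter_upwards [hcn.eventually_const_lt h] with x hx
      simp only [hF]
      rw [indicator_of_notMem]
      simpa using hx.le

/-! ### The Green function and its derivative -/

lemma qbracket_pos {n : ℕ} {a x : En n} (ha : ‖a‖ < 1) (hx : ‖x‖ < 1) : 0 < qbracket a x :=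
  (sub_pos.2 ha).trans_le (le_qbracket ha le_rfl hx)

/-- The identity `1 - |φ_x(y)|² = (1-|x|²)(1-|y|²)/[x,y]²`, with `|φ_x(y)|` written out. -/
lemma one_sub_ratio_sq {n : ℕ} {x y : En n} (hx : ‖x‖ < 1) (hy : ‖y‖ < 1) :
    1 - (‖y - x‖ / qbracket x y) ^ 2 = (1 - ‖x‖ ^ 2) * (1 - ‖y‖ ^ 2) / qbracket x y ^ 2 := by
  have hq := qbracket_pos hx hy
  have hq2 := qbracket_sq hx hy
  rw [div_pow, eq_div_iff (by positivity), sub_mul, div_mul_cancel₀ _ (by positivity), hq2]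
  ring

lemma Gh_eq (n : ℕ) (x y : En n) : Gh n x y = gfun n (‖y - x‖ / qbracket x y) := by
  rw [Gh, norm_mobius]

/-- The directional derivative of `G_h(·, y)` at `x` along `e`: with `r = |y-x|/[x,y]`, it is
`g'(r)` times the derivative of `r`. -/
noncomputable def dker (n : ℕ) (e x y : En n) : ℝ :=
  -((1 / (n : ℝ)) * ((1 - (‖y - x‖ / qbracket x y) ^ 2) ^ (n - 2)
      / (‖y - x‖ / qbracket x y) ^ (n - 1))) *
    ((1 - ‖y‖ ^ 2) * (inner ℝ x e * ‖y - x‖ ^ 2 - inner ℝ (y - x) e * (1 - ‖x‖ ^ 2))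
      / (qbracket x y ^ 4 * (‖y - x‖ / qbracket x y)))

lemma hasDerivAt_Gh {n : ℕ} {x y : En n} (e : En n) (hx : ‖x‖ < 1) (hy : ‖y‖ < 1) (hxy : x ≠ y) :
    HasDerivAt (fun t : ℝ => Gh n (x + t • e) y) (dker n e x y) 0 := by
  have hq := qbracket_pos hx hy
  have hq2 := qbracket_sq hx hy
  have hd : 0 < ‖y - x‖ := norm_pos_iff.2 (sub_ne_zero.2 hxy.symm)
  have hc : HasDerivAt (fun t : ℝ => x + t • e) e 0 := by
    simpa using ((hasDerivAt_id (0 : ℝ)).smul_const e).const_add x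
  have hP := hc.norm_sq
  have hN := (hc.const_sub y).norm_sq
  have hQ := hN.add ((hP.const_sub 1).const_mul (1 - ‖y‖ ^ 2))
  have hQ0 : ‖y - (x + (0 : ℝ) • e)‖ ^ 2 + (1 - ‖y‖ ^ 2) * (1 - ‖x + (0 : ℝ) • e‖ ^ 2)
      = qbracket x y ^ 2 := by simp [hq2]
  -- It is `|φ_x(y)|²`, a quotient of squared norms, that is differentiated before taking the root.
  have hR := hN.div hQ (by simp only [Pi.add_apply]; rw [hQ0]; positivity)
  have hr := hR.sqrt (by
    simp only [Pi.div_apply, Pi.add_apply]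
    rw [hQ0]; simp only [zero_smul, add_zero]; positivity)
  have hval : √(‖y - (x + (0 : ℝ) • e)‖ ^ 2 / (‖y - (x + (0 : ℝ) • e)‖ ^ 2
      + (1 - ‖y‖ ^ 2) * (1 - ‖x + (0 : ℝ) • e‖ ^ 2))) = ‖y - x‖ / qbracket x y := by
    rw [hQ0, ← div_pow, Real.sqrt_sq (by positivity)]
    simp
  have hg := gfun_hasDerivAt n (r := ‖y - x‖ / qbracket x y) (by positivity)
  rw [← hval] at hg
  have h := HasDerivAt.comp (0 : ℝ) hg hr
  refine (h.congr_deriv ?_).congr_of_eventuallyEq ?_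
  · rw [hval]
    simp only [Pi.div_apply, Pi.add_apply]
    rw [hval, hQ0, dker]
    congr 1
    simp only [zero_smul, add_zero, inner_neg_right]
    field_simp
    rw [hq2]
    ring
  · filter_upwards with t
    simp only [Function.comp, Pi.div_apply, Pi.add_apply]
    rw [Gh_eq, Real.sqrt_div (sq_nonneg _), Real.sqrt_sq (norm_nonneg _)]
    rfl

lemma continuous_qbracket (n : ℕ) : Continuous (fun p : En n × En n => qbracket p.1 p.2) := by
  unfold qbracket
  fun_prop

lemma continuousOn_Gh (n : ℕ) : ContinuousOn (fun p : En n × En n => Gh n p.1 p.2)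
    {p | p.1 ∈ ball (0 : En n) 1 ∧ p.2 ∈ ball (0 : En n) 1 ∧ p.1 ≠ p.2} := by
  rintro p ⟨hx, hy, hxy⟩
  rw [mem_ball_zero_iff] at hx hy
  have hq := qbracket_pos hx hy
  have hd : 0 < ‖p.2 - p.1‖ := norm_pos_iff.2 (sub_ne_zero.2 hxy.symm)
  simp only [Gh_eq]
  refine ContinuousAt.continuousWithinAt ?_
  have hg := (gfun_hasDerivAt n (r := ‖p.2 - p.1‖ / qbracket p.1 p.2) (by positivity)).continuousAt
  exact ContinuousAt.comp (x := p)
    (f := fun p : En n × En n => ‖p.2 - p.1‖ / qbracket p.1 p.2) hg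
    (ContinuousAt.div (by fun_prop) (continuous_qbracket n).continuousAt hq.ne')

lemma continuousOn_dker (n : ℕ) (e : En n) :
    ContinuousOn (fun p : En n × En n => dker n e p.1 p.2)
      {p | p.1 ∈ ball (0 : En n) 1 ∧ p.2 ∈ ball (0 : En n) 1 ∧ p.1 ≠ p.2} := by
  rintro p ⟨hx, hy, hxy⟩
  rw [mem_ball_zero_iff] at hx hy
  have hq := qbracket_pos hx hy
  have hd : 0 < ‖p.2 - p.1‖ := norm_pos_iff.2 (sub_ne_zero.2 hxy.symm)
  have hqc := (continuous_qbracket n).continuousAt (x := p)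
  have hr : ContinuousAt (fun p : En n × En n => ‖p.2 - p.1‖ / qbracket p.1 p.2) p :=
    ContinuousAt.div (by fun_prop) hqc hq.ne'
  refine ContinuousAt.continuousWithinAt ?_
  unfold dker
  refine ContinuousAt.mul (ContinuousAt.neg (continuousAt_const.mul (ContinuousAt.div ?_ ?_ ?_)))
    (ContinuousAt.div ?_ ((hqc.pow 4).mul hr) ?_)
  · exact (continuousAt_const.sub (hr.pow 2)).pow _
  · exact hr.pow _
  · positivity
  · fun_prop
  · positivity

/-! ### Size of the kernels -/

lemma Gh_bound {n : ℕ} (hn : 3 ≤ n) {ρ : ℝ} (hρ : ρ < 1) {x y : En n} (hx : ‖x‖ ≤ ρ)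
    (hy : ‖y‖ < 1) (hxy : x ≠ y) :
    |Gh n x y| ≤ ((1 - ρ) ^ (n - 1))⁻¹ * (1 - ‖y‖ ^ 2) ^ (n - 1) / ‖y - x‖ ^ (n - 1) := by
  have hx1 := hx.trans_lt hρ
  have hq := qbracket_pos hx1 hy
  have hqρ := le_qbracket hρ hx hy
  have hρ' : 0 < 1 - ρ := sub_pos.2 hρ
  have hd : 0 < ‖y - x‖ := norm_pos_iff.2 (sub_ne_zero.2 hxy.symm)
  have h1 : 0 ≤ 1 - ‖x‖ ^ 2 := by nlinarith [norm_nonneg x]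
  have h2 : 0 ≤ 1 - ‖y‖ ^ 2 := by nlinarith [norm_nonneg y]
  have hr := one_sub_ratio_sq hx1 hy
  have hr1 : ‖y - x‖ / qbracket x y ≤ 1 := by
    rw [← sq_le_one_iff₀ (by positivity), ← sub_nonneg, hr]
    positivity
  have h := gfun_bound hn (r := ‖y - x‖ / qbracket x y) (by positivity) hr1
  rw [Gh_eq]
  refine h.trans ?_
  rw [hr]
  calc _ = (1 - ‖x‖ ^ 2) ^ (n - 1) * ((qbracket x y ^ (n - 1))⁻¹ * (1 - ‖y‖ ^ 2) ^ (n - 1)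
          / ‖y - x‖ ^ (n - 1)) := by
        rw [div_pow, div_pow, mul_pow, ← pow_mul, mul_comm 2, pow_mul]
        field_simp
    _ ≤ 1 * (((1 - ρ) ^ (n - 1))⁻¹ * (1 - ‖y‖ ^ 2) ^ (n - 1) / ‖y - x‖ ^ (n - 1)) := by
        gcongr
        exact pow_le_one₀ h1 (by nlinarith [sq_nonneg ‖x‖])
    _ = _ := one_mul _

lemma dker_bound {n : ℕ} (hn : 3 ≤ n) {ρ : ℝ} (hρ : ρ < 1) {e x y : En n} (he : ‖e‖ = 1)
    (hx : ‖x‖ ≤ ρ) (hy : ‖y‖ < 1) (hxy : x ≠ y) :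
    |dker n e x y| ≤ 3 * ((1 - ρ) ^ n)⁻¹ * (1 - ‖y‖ ^ 2) ^ (n - 1) / ‖y - x‖ ^ (n - 1) := by
  have hx1 := hx.trans_lt hρ
  have hq := qbracket_pos hx1 hy
  have hqρ := le_qbracket hρ hx hy
  have hρ' : 0 < 1 - ρ := sub_pos.2 hρ
  have hd : 0 < ‖y - x‖ := norm_pos_iff.2 (sub_ne_zero.2 hxy.symm)
  have h1 : 0 ≤ 1 - ‖x‖ ^ 2 := by nlinarith [norm_nonneg x]
  have h1' : 1 - ‖x‖ ^ 2 ≤ 1 := by nlinarith [sq_nonneg ‖x‖]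
  have h2 : 0 ≤ 1 - ‖y‖ ^ 2 := by nlinarith [norm_nonneg y]
  have hr := one_sub_ratio_sq hx1 hy
  have hn1 : (1 / (n : ℝ)) ≤ 1 := by
    rw [div_le_one (by positivity)]
    exact_mod_cast (by omega : 1 ≤ n)
  have hnum : |inner ℝ x e * ‖y - x‖ ^ 2 - inner ℝ (y - x) e * (1 - ‖x‖ ^ 2)|
      ≤ 3 * ‖y - x‖ := by
    have ha := abs_real_inner_le_norm x e
    have hb := abs_real_inner_le_norm (y - x) e
    rw [he, mul_one] at ha hb
    have hd2 : ‖y - x‖ ≤ 2 := (norm_sub_le y x).trans (by linarith)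
    calc _ ≤ |inner ℝ x e| * ‖y - x‖ ^ 2 + |inner ℝ (y - x) e| * (1 - ‖x‖ ^ 2) := by
          refine (abs_sub _ _).trans ?_
          rw [abs_mul, abs_mul, abs_of_nonneg h1, abs_of_nonneg (sq_nonneg ‖y - x‖)]
      _ ≤ 1 * (2 * ‖y - x‖) + ‖y - x‖ * 1 := by
          gcongr
          · linarith
          · nlinarith
      _ = _ := by ring
  rw [dker, abs_mul, abs_neg, hr, abs_of_nonneg (by positivity), abs_div, abs_mul,
    abs_of_nonneg h2, abs_of_pos (by positivity : 0 < qbracket x y ^ 4 * (‖y - x‖ / qbracket x y))]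
  obtain ⟨m, rfl⟩ : ∃ m, n = m + 3 := ⟨n - 3, by omega⟩
  simp only [show m + 3 - 2 = m + 1 by omega, show m + 3 - 1 = m + 2 by omega]
  calc _ ≤ 1 * ((1 * (1 - ‖y‖ ^ 2) / qbracket x y ^ 2) ^ (m + 1)
        / (‖y - x‖ / qbracket x y) ^ (m + 2)) *
      ((1 - ‖y‖ ^ 2) * (3 * ‖y - x‖) / (qbracket x y ^ 4 * (‖y - x‖ / qbracket x y))) := by
        gcongr
    _ = 3 * (qbracket x y ^ (m + 3))⁻¹ * (1 - ‖y‖ ^ 2) ^ (m + 2) / ‖y - x‖ ^ (m + 2) := by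
        rw [div_pow, div_pow, one_mul, one_mul, ← pow_mul, mul_comm 2, pow_mul]
        field_simp
        ring
    _ ≤ _ := by gcongr

/-! ### Continuity of the Green integral and of the differentiated integral -/

/-- continuity in `𝔹ⁿ` of `Ψ = G_h[ψ]` and of
`x ↦ ∫_{𝔹ⁿ} (∂G_h/∂x_k)(x,y) ψ(y) dτ(y)`. -/
theorem stmt_17 (n : ℕ) (hn : 3 ≤ n) (M : ℝ) (hM : 0 ≤ M) (ψ : En n → En n)
    (hψc : ContinuousOn ψ (ball (0 : En n) 1))
    (hψb : ∀ x ∈ ball (0 : En n) 1, ‖ψ x‖ ≤ M * (1 - ‖x‖ ^ 2)) :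
    ContinuousOn (GhInt n ψ) (ball (0 : En n) 1) ∧
    ∀ k : Fin n,
      ContinuousOn (fun x : En n =>
          ∫ y in ball (0 : En n) 1,
            (deriv (fun t : ℝ => Gh n (x + t • basisE n k) y) 0) • ψ y ∂(tauMeasure n))
        (ball (0 : En n) 1) := by
  refine ⟨continuousOn_potential hn hM hψc hψb (continuousOn_Gh n) fun ρ hρ =>
    ⟨((1 - ρ) ^ (n - 1))⁻¹, ?_, fun x y hx hy hxy => Gh_bound hn hρ hx hy hxy⟩, fun k => ?_⟩
  · have : 0 < 1 - ρ := sub_pos.2 hρ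
    positivity
  have hk : ‖basisE n k‖ = 1 := by simp [basisE]
  have heq : ∀ x y : En n, ‖x‖ < 1 → ‖y‖ < 1 → x ≠ y →
      deriv (fun t : ℝ => Gh n (x + t • basisE n k) y) 0 = dker n (basisE n k) x y :=
    fun x y hx hy hxy => (hasDerivAt_Gh _ hx hy hxy).deriv
  refine continuousOn_potential hn hM hψc hψb
    (K := fun x y => deriv (fun t : ℝ => Gh n (x + t • basisE n k) y) 0)
    ((continuousOn_dker n (basisE n k)).congr fun p hp =>
      heq _ _ (mem_ball_zero_iff.1 hp.1) (mem_ball_zero_iff.1 hp.2.1) hp.2.2)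
    fun ρ hρ => ⟨3 * ((1 - ρ) ^ n)⁻¹, ?_, fun x y hx hy hxy => ?_⟩
  · have : 0 < 1 - ρ := sub_pos.2 hρ
    positivity
  · rw [heq x y (hx.trans_lt hρ) hy hxy]
    exact dker_bound hn hρ hk hx hy hxy
end
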